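/- Let R be a commutative Noetherian ring, 𝔞 a proper ideal of R, t ≥ 0 an integer, and M an R-module such that Ext^i_R(R/𝔞, M) is a finitely generated R-module for every i ≥ 0. If H^i_𝔞(M) belongs to FD_{≤1} for every integer 0 ≤ i < t, then the set of associated primes Ass_R H^t_𝔞(M) is finite. -/

import Mathlib

open CategoryTheory

universe u

/-- The `R`-module `Ext^i_R(N, M)` for two `R`-modules (objects of `ModuleCat R`). -/
noncomputable def extObj {R : Type u} [CommRing R] (N M : ModuleCat.{u} R) (i : ℕ) :
    ModuleCat.{u} R :=
  ((Ext R (ModuleCat.{u} R) i).obj (Opposite.op N)).obj M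

/-- The `R`-module `Ext^i_R(R/𝔞, M)`. -/
noncomputable def extIdeal {R : Type u} [CommRing R] (𝔞 : Ideal R) (i : ℕ)
    (M : ModuleCat.{u} R) : ModuleCat.{u} R :=
  extObj (ModuleCat.of R (R ⧸ 𝔞)) M i

/-- An `R`-module `M` is `𝔞`-cofinite if `Supp_R M ⊆ V(𝔞)` and `Ext^i_R(R/𝔞, M)` is a finitely
generated `R`-module for every `i ≥ 0`. -/
def IsCofinite {R : Type u} [CommRing R] (𝔞 : Ideal R) (M : ModuleCat.{u} R) : Prop :=
  Module.support R M ⊆ PrimeSpectrum.zeroLocus (𝔞 : Set R) ∧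
    ∀ i : ℕ, Module.Finite R (extIdeal 𝔞 i M)

/-- The Krull dimension `dim_R M` of an `R`-module `M`: the Krull dimension of its support,
i.e. the supremum of `dim R/𝔭` over primes `𝔭` in the support of `M`. -/
noncomputable def moduleDim (R : Type u) [CommRing R] (M : Type u) [AddCommGroup M]
    [Module R M] : WithBot ℕ∞ :=
  Order.krullDim (Module.support R M)

/-- An `R`-module `M` is in `FD_{≤n}` if there is a finitely generated submodule `N ⊆ M`
with `dim_R (M/N) ≤ n`. -/
def MemFD (R : Type u) [CommRing R] (n : ℕ) (M : Type u) [AddCommGroup M] [Module R M] : Prop :=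
  ∃ N : Submodule R M, N.FG ∧ moduleDim R (M ⧸ N) ≤ (n : WithBot ℕ∞)

/-- An `R`-module `M` is `𝔞`-torsion if every element is annihilated by some power of `𝔞`. -/
def IsTorsionIdeal {R : Type u} [CommRing R] (𝔞 : Ideal R) (M : Type u) [AddCommGroup M]
    [Module R M] : Prop :=
  ∀ m : M, ∃ n : ℕ, ∀ a ∈ 𝔞 ^ n, a • m = 0

/-- The arithmetic rank of an ideal `𝔞`: the least `n` such that there exist `a₁, …, aₙ ∈ R`
with `Rad (a₁, …, aₙ) = Rad 𝔞`. -/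
noncomputable def arithRank {R : Type u} [CommRing R] (𝔞 : Ideal R) : ℕ :=
  sInf {n : ℕ | ∃ f : Fin n → R, (Ideal.span (Set.range f)).radical = 𝔞.radical}

section LocalCohomologyFiniteness

open Limits Opposite

noncomputable section ExtComparison

variable {R : Type u} [CommRing R]

/-- The map induced on `Hom(-, M)` by a chain map. -/
def linearYonedaObjMap {X Y : ChainComplex (ModuleCat.{u} R) ℕ} (φ : X ⟶ Y) (M : ModuleCat.{u} R) :
    Y.linearYonedaObj R M ⟶ X.linearYonedaObj R M :=
  (HomologicalComplex.unopFunctor _ _).map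
    ((((linearYoneda R (ModuleCat.{u} R)).obj M).rightOp.mapHomologicalComplex _).map φ).op

lemma comp_inv_eq_of_comp_eq {C : Type*} [Category C] {A A' B B' D D' : C} (a : A ⟶ A')
    (e : A ⟶ B) (e' : A' ⟶ B') (b : B ⟶ B') (i : D ≅ B) (i' : D' ≅ B') (d : D ⟶ D')
    (h : a ≫ e' = e ≫ b) (h' : i.hom ≫ b = d ≫ i'.hom) :
    a ≫ e' ≫ i'.inv = (e ≫ i.inv) ≫ d := by
  rw [reassoc_of% h, Category.assoc]
  congr 1
  rw [Iso.comp_inv_eq, Category.assoc, ← h', Iso.inv_hom_id_assoc]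

lemma isoExt_naturality {X Y : ModuleCat.{u} R} (f : X ⟶ Y) (P : ProjectiveResolution X)
    (Q : ProjectiveResolution Y) (φ : P.complex ⟶ Q.complex)
    (comm : φ.f 0 ≫ Q.π.f 0 = P.π.f 0 ≫ f) (n : ℕ) (M : ModuleCat.{u} R) :
    ((Ext R (ModuleCat.{u} R) n).map f.op).app M ≫ (P.isoExt n M).hom =
      (Q.isoExt n M).hom ≫ HomologicalComplex.homologyMap (linearYonedaObjMap φ M) n := by
  have h2 := congrArg Quiver.Hom.unop
    (HomologicalComplex.homologyOp_hom_naturality (linearYonedaObjMap φ M) n)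
  have h3 := congrArg Quiver.Hom.unop
    (ProjectiveResolution.isoLeftDerivedObj_inv_naturality f P Q φ comm
      ((linearYoneda R (ModuleCat.{u} R)).obj M).rightOp n)
  set F := ((linearYoneda R (ModuleCat.{u} R)).obj M).rightOp
  exact comp_inv_eq_of_comp_eq _ _ _
    ((F.mapHomologicalComplex _ ⋙ HomologicalComplex.homologyFunctor _ _ n).map φ).unop
    (HomologicalComplex.homologyUnop ((F.mapHomologicalComplex _).obj Q.complex) n)
    (HomologicalComplex.homologyUnop ((F.mapHomologicalComplex _).obj P.complex) n) _ h3 h2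

namespace CategoryTheory.ProjectiveResolution

lemma extMk_zero_eq_zero_iff {X Y : ModuleCat.{u} R} (P : ProjectiveResolution X)
    (f : P.complex.X 0 ⟶ Y) (hf : P.complex.d 1 0 ≫ f = 0) :
    P.extMk f 1 rfl hf = 0 ↔ f = 0 := by
  constructor
  · intro h
    rw [← P.extEquivCohomologyClass.apply_eq_iff_eq, extEquivCohomologyClass_extMk,
      extEquivCohomologyClass_zero, CochainComplex.HomComplex.CohomologyClass.mk_eq_zero_iff,
      CochainComplex.HomComplex.Cocycle.toSingleMk_mem_coboundaries_iff _ _ _ _ _ 1 (by simp)] at h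
    obtain ⟨g, hg⟩ := h
    have h0 : P.cochainComplex.d (-((0:ℕ):ℤ)) 1 = 0 :=
      (P.cochainComplex.isZero_of_isStrictlyLE 0 1 (by simp)).eq_of_tgt _ _
    rw [h0, zero_comp] at hg
    rw [← cancel_epi (P.cochainComplexXIso (-((0:ℕ):ℤ)) 0 rfl).hom]
    simpa using hg.symm
  · rintro rfl
    simp

lemma extMk_eq_zero_iff_exists_prev {X Y : ModuleCat.{u} R} (P : ProjectiveResolution X) (n : ℕ)
    (f : P.complex.X n ⟶ Y) (hf : P.complex.d (n + 1) n ≫ f = 0) :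
    P.extMk f (n + 1) rfl hf = 0 ↔
      ∃ g : P.complex.X ((ComplexShape.up ℕ).prev n) ⟶ Y,
        P.complex.d n ((ComplexShape.up ℕ).prev n) ≫ g = f := by
  cases n with
  | zero =>
    rw [extMk_zero_eq_zero_iff]
    simp [eq_comm]
  | succ n =>
    rw [extMk_eq_zero_iff _ _ _ _ _ n rfl, CochainComplex.prev_nat_succ]

variable {X : ModuleCat.{u} R} (P : ProjectiveResolution X) (M : ModuleCat.{u} R) (n : ℕ)

/-- The morphism underlying a cycle of `Hom(P, M)`. -/
abbrev cocycleOfCycles (z : (P.complex.linearYonedaObj R M).cycles n) : P.complex.X n ⟶ M :=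
  (P.complex.linearYonedaObj R M).iCycles n z

lemma d_comp_iCycles (z : (P.complex.linearYonedaObj R M).cycles n) :
    P.complex.d (n + 1) n ≫ P.cocycleOfCycles M n z = 0 := by
  have := congrArg (fun g => g.hom z) ((P.complex.linearYonedaObj R M).iCycles_d n (n + 1))
  exact this

/-- The `Ext` class represented by a cycle of `Hom(P, M)`. -/
def cyclesToExt : (P.complex.linearYonedaObj R M).cycles n →ₗ[R] Abelian.Ext X M n where
  toFun z := P.extMk (P.cocycleOfCycles M n z) (n + 1) rfl (d_comp_iCycles P M n z)
  map_add' z w := by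
    rw [add_extMk]
    congr 1
    exact map_add _ _ _
  map_smul' r z := by
    rw [Abelian.Ext.smul_eq_comp_mk₀, RingHom.id_apply, extMk_comp_mk₀]
    congr 1
    rw [Linear.comp_smul, Category.comp_id]
    exact map_smul _ _ _

lemma cyclesToExt_surjective : Function.Surjective (P.cyclesToExt M n) := by
  intro α
  obtain ⟨f, hf, rfl⟩ := P.extMk_surjective α (n + 1) rfl
  have hex : (ShortComplex.mk _ _ ((P.complex.linearYonedaObj R M).iCycles_d n (n + 1))).Exact :=
    ShortComplex.exact_of_f_is_kernel _
      ((P.complex.linearYonedaObj R M).cyclesIsKernel n (n + 1) (by simp))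
  rw [ShortComplex.moduleCat_exact_iff] at hex
  obtain ⟨z, hz⟩ := hex f hf
  refine ⟨z, ?_⟩
  change P.extMk (P.cocycleOfCycles M n z) (n + 1) rfl (d_comp_iCycles P M n z) = _
  congr 1

lemma cyclesToExt_eq_zero_iff (z : (P.complex.linearYonedaObj R M).cycles n) :
    P.cyclesToExt M n z = 0 ↔ (P.complex.linearYonedaObj R M).homologyπ n z = 0 := by
  let K := P.complex.linearYonedaObj R M
  have hex : (ShortComplex.mk _ _
      (K.toCycles_comp_homologyπ ((ComplexShape.up ℕ).prev n) n)).Exact :=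
    ShortComplex.exact_of_g_is_cokernel _ (K.homologyIsCokernel _ n rfl)
  have hex' := (ShortComplex.moduleCat_exact_iff _).1 hex z
  refine (P.extMk_eq_zero_iff_exists_prev n (P.cocycleOfCycles M n z)
    (d_comp_iCycles P M n z)).trans ⟨fun ⟨g, hg⟩ => ?_, fun h => ?_⟩
  · have : z = K.toCycles ((ComplexShape.up ℕ).prev n) n g := by
      apply (ModuleCat.mono_iff_injective (K.iCycles n)).1 inferInstance
      have := congrArg (fun q => q.hom g) (K.toCycles_i ((ComplexShape.up ℕ).prev n) n)
      exact hg.symm.trans this.symm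
    rw [this]
    exact congrArg (fun q => q.hom g) (K.toCycles_comp_homologyπ ((ComplexShape.up ℕ).prev n) n)
  · obtain ⟨g, hg⟩ := hex' h
    refine ⟨g, ?_⟩
    have := congrArg (fun q => q.hom g) (K.toCycles_i ((ComplexShape.up ℕ).prev n) n)
    change P.complex.d _ _ ≫ g = K.iCycles n z
    rw [← hg]
    exact this.symm

/-- `Ext` computed as the cohomology of `Hom(P, M)` for a projective resolution `P`. -/
def homologyEquivExt : (P.complex.linearYonedaObj R M).homology n ≃ₗ[R] Abelian.Ext X M n :=
  have hπ : Function.Surjective ((P.complex.linearYonedaObj R M).homologyπ n).hom :=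
    (ModuleCat.epi_iff_surjective _).1 inferInstance
  (((P.complex.linearYonedaObj R M).homologyπ n).hom.quotKerEquivOfSurjective hπ).symm ≪≫ₗ
    Submodule.quotEquivOfEq _ _ (by
      ext z
      exact (cyclesToExt_eq_zero_iff P M n z).symm) ≪≫ₗ
    (P.cyclesToExt M n).quotKerEquivOfSurjective (P.cyclesToExt_surjective M n)

lemma homologyEquivExt_homologyπ (z : (P.complex.linearYonedaObj R M).cycles n) :
    P.homologyEquivExt M n ((P.complex.linearYonedaObj R M).homologyπ n z) =
      P.cyclesToExt M n z := by
  have hπ : Function.Surjective ((P.complex.linearYonedaObj R M).homologyπ n).hom :=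
    (ModuleCat.epi_iff_surjective _).1 inferInstance
  have : (((P.complex.linearYonedaObj R M).homologyπ n).hom.quotKerEquivOfSurjective hπ).symm
      ((P.complex.linearYonedaObj R M).homologyπ n z) = Submodule.Quotient.mk z := by
    rw [LinearEquiv.symm_apply_eq]
    rfl
  simp only [homologyEquivExt, LinearEquiv.trans_apply, this]
  rfl

lemma homologyEquivExt_naturality {X Y : ModuleCat.{u} R} (f : X ⟶ Y)
    (P : ProjectiveResolution X) (Q : ProjectiveResolution Y) (φ : P.Hom Q f) (n : ℕ)
    (M : ModuleCat.{u} R) (x : (Q.complex.linearYonedaObj R M).homology n) :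
    P.homologyEquivExt M n (HomologicalComplex.homologyMap (linearYonedaObjMap φ.hom M) n x) =
      (Abelian.Ext.mk₀ f).comp (Q.homologyEquivExt M n x) (zero_add n) := by
  obtain ⟨z, rfl⟩ : ∃ z, (Q.complex.linearYonedaObj R M).homologyπ n z = x :=
    (ModuleCat.epi_iff_surjective _).1 inferInstance x
  rw [homologyEquivExt_homologyπ]
  have h1 := congrArg (fun q => q.hom z)
    (HomologicalComplex.homologyπ_naturality (linearYonedaObjMap φ.hom M) n)
  have h2 := congrArg (fun q => q.hom z)
    (HomologicalComplex.cyclesMap_i (linearYonedaObjMap φ.hom M) n)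
  have h3 : HomologicalComplex.homologyMap (linearYonedaObjMap φ.hom M) n
      ((Q.complex.linearYonedaObj R M).homologyπ n z) =
      (P.complex.linearYonedaObj R M).homologyπ n
        (HomologicalComplex.cyclesMap (linearYonedaObjMap φ.hom M) n z) := h1
  rw [h3, homologyEquivExt_homologyπ]
  change P.extMk (P.cocycleOfCycles M n _) (n + 1) rfl (d_comp_iCycles P M n _) =
    (Abelian.Ext.mk₀ f).comp
      (Q.extMk (Q.cocycleOfCycles M n z) (n + 1) rfl (d_comp_iCycles Q M n z)) _
  rw [mk₀_comp_extMk (φ := φ)]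
  congr 1

end CategoryTheory.ProjectiveResolution

/-- Comparison of the derived functor `Ext` with `Abelian.Ext`. -/
def extEquiv (N M : ModuleCat.{u} R) (n : ℕ) :
    ((Ext R (ModuleCat.{u} R) n).obj (op N)).obj M ≃ₗ[R] Abelian.Ext N M n :=
  ((projectiveResolution N).isoExt n M).toLinearEquiv ≪≫ₗ
    (projectiveResolution N).homologyEquivExt M n

lemma extEquiv_naturality {X Y : ModuleCat.{u} R} (f : X ⟶ Y) (M : ModuleCat.{u} R) (n : ℕ)
    (x : ((Ext R (ModuleCat.{u} R) n).obj (op Y)).obj M) :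
    extEquiv X M n (((Ext R (ModuleCat.{u} R) n).map f.op).app M x) =
      (Abelian.Ext.mk₀ f).comp (extEquiv Y M n x) (zero_add n) := by
  let P := projectiveResolution X
  let Q := projectiveResolution Y
  let φ : P.Hom Q f :=
    ⟨ProjectiveResolution.lift f P Q, ProjectiveResolution.lift_commutes_zero f P Q⟩
  have comm : φ.hom.f 0 ≫ Q.π.f 0 = P.π.f 0 ≫ f := φ.hom_f_zero_comp_π_f_zero
  have h1 := congrArg (fun q => q.hom x) (isoExt_naturality f P Q φ.hom comm n M)
  exact (congrArg (P.homologyEquivExt M n) h1).trans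
    (ProjectiveResolution.homologyEquivExt_naturality f P Q φ n M _)

end ExtComparison

noncomputable section LocalCohomologyIota

variable {R : Type u} [CommRing R] (𝔞 : Ideal R)

/-- The quotient `R/𝔞^n`. -/
abbrev quotPow (n : ℕ) : ModuleCat.{u} R := ModuleCat.of R (R ⧸ 𝔞 ^ n)

/-- The projection `R/𝔞^m ⟶ R/𝔞^n` for `n ≤ m`. -/
def quotPowMap {n m : ℕ} (h : n ≤ m) : quotPow 𝔞 m ⟶ quotPow 𝔞 n :=
  ModuleCat.ofHom (Submodule.mapQ _ _ LinearMap.id (Ideal.pow_le_pow_right h))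

lemma quotPowMap_comp {n m k : ℕ} (h : n ≤ m) (h' : m ≤ k) :
    quotPowMap 𝔞 h' ≫ quotPowMap 𝔞 h = quotPowMap 𝔞 (h.trans h') := by
  ext
  rfl

variable (M : ModuleCat.{u} R) (i : ℕ)

/-- The transition map `Ext^i(R/𝔞^n, M) → Ext^i(R/𝔞^m, M)` for `n ≤ m`. -/
def extRes {n m : ℕ} (h : n ≤ m) :
    Abelian.Ext (quotPow 𝔞 n) M i →ₗ[R] Abelian.Ext (quotPow 𝔞 m) M i :=
  (Abelian.Ext.mk₀ (quotPowMap 𝔞 h)).precompOfLinear R M (zero_add i)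

lemma extRes_apply {n m : ℕ} (h : n ≤ m) (x : Abelian.Ext (quotPow 𝔞 n) M i) :
    extRes 𝔞 M i h x = (Abelian.Ext.mk₀ (quotPowMap 𝔞 h)).comp x (zero_add i) := rfl

/-- The structure map `Ext^i(R/𝔞^n, M) → H^i_𝔞(M)`. -/
def lcι (n : ℕ) : Abelian.Ext (quotPow 𝔞 n) M i →ₗ[R] (localCohomology 𝔞 i).obj M :=
  ((colimit.ι (localCohomology.diagram (localCohomology.idealPowersDiagram 𝔞) i)
    (op (op n))).app M).hom ∘ₗ (extEquiv (quotPow 𝔞 n) M i).symm.toLinearMap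

lemma lcι_extEquiv (n : ℕ) (x : ((Ext R (ModuleCat.{u} R) i).obj (op (quotPow 𝔞 n))).obj M) :
    lcι 𝔞 M i n (extEquiv _ M i x) =
    ((colimit.ι (localCohomology.diagram (localCohomology.idealPowersDiagram 𝔞) i)
    (op (op n))).app M).hom x := by
  exact congrArg ((colimit.ι (localCohomology.diagram (localCohomology.idealPowersDiagram 𝔞) i)
    (op (op n))).app M).hom ((extEquiv _ M i).symm_apply_apply x)

lemma extRes_extEquiv {n m : ℕ} (h : n ≤ m)
    (x : ((Ext R (ModuleCat.{u} R) i).obj (op (quotPow 𝔞 n))).obj M) :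
    extRes 𝔞 M i h (extEquiv _ M i x) = extEquiv (quotPow 𝔞 m) M i
      (((localCohomology.diagram (localCohomology.idealPowersDiagram 𝔞) i).map
    (homOfLE h).op.op).app M x) :=
  (extEquiv_naturality (quotPowMap 𝔞 h) M i x).symm

/-- Local cohomology at `M` as a cocone on the modules `Ext^i(R/𝔞^n, M)`. -/
abbrev lcCocone :
    Cocone (localCohomology.diagram (localCohomology.idealPowersDiagram 𝔞) i ⋙
      (evaluation _ _).obj M) :=
  ((evaluation _ _).obj M).mapCocone
    (colimit.cocone (localCohomology.diagram (localCohomology.idealPowersDiagram 𝔞) i))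

/-- Local cohomology at `M` is the colimit of the modules `Ext^i(R/𝔞^n, M)`. -/
def lcIsColimit : IsColimit (lcCocone 𝔞 M i) :=
  isColimitOfPreserves _ (colimit.isColimit _)

lemma lcι_extRes {n m : ℕ} (h : n ≤ m) (x : Abelian.Ext (quotPow 𝔞 n) M i) :
    lcι 𝔞 M i m (extRes 𝔞 M i h x) = lcι 𝔞 M i n x := by
  obtain ⟨x, rfl⟩ := (extEquiv _ M i).surjective x
  rw [extRes_extEquiv]
  refine (lcι_extEquiv 𝔞 M i m _).trans (Eq.trans ?_ (lcι_extEquiv 𝔞 M i n x).symm)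
  exact congrArg (fun q => q.hom x) ((lcCocone 𝔞 M i).w (homOfLE h).op.op)

instance : PreservesFilteredColimitsOfSize.{0, 0} (forget (ModuleCat.{u} R)) :=
  preservesFilteredColimitsOfSize_shrink.{0, u, 0, u} _

lemma exists_lcι_eq (y : (localCohomology 𝔞 i).obj M) : ∃ n x, lcι 𝔞 M i n x = y := by
  obtain ⟨j, x, hx⟩ := Concrete.isColimit_exists_rep _ (lcIsColimit 𝔞 M i) y
  exact ⟨j.unop.unop, extEquiv _ M i x, (lcι_extEquiv _ _ _ _ _).trans hx⟩

lemma lcι_eq_zero {n : ℕ} {x : Abelian.Ext (quotPow 𝔞 n) M i} (hx : lcι 𝔞 M i n x = 0) :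
    ∃ (m : ℕ) (h : n ≤ m), extRes 𝔞 M i h x = 0 := by
  obtain ⟨x, rfl⟩ := (extEquiv _ M i).surjective x
  rw [lcι_extEquiv] at hx
  obtain ⟨j, f, g, hf⟩ := Concrete.isColimit_exists_of_rep_eq _ (D := lcCocone 𝔞 M i)
    (i := op (op n)) (j := op (op n)) (lcIsColimit 𝔞 M i) x 0 (hx.trans (map_zero _).symm)
  refine ⟨j.unop.unop, f.unop.unop.le, ?_⟩
  rw [extRes_extEquiv]
  exact (congrArg _ (hf.trans (map_zero _))).trans (map_zero _)

end LocalCohomologyIota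

section Torsion

variable {R : Type u} [CommRing R] (𝔞 : Ideal R)

/-- The submodule `Γ_𝔞(M)` of elements killed by a power of `𝔞`. -/
def torsionSub (M : Type u) [AddCommGroup M] [Module R M] : Submodule R M where
  carrier := {m | ∃ n : ℕ, ∀ a ∈ 𝔞 ^ n, a • m = 0}
  zero_mem' := ⟨0, by simp⟩
  add_mem' := by
    rintro x y ⟨n, hn⟩ ⟨m, hm⟩
    refine ⟨max n m, fun a ha => ?_⟩
    rw [smul_add, hn a (Ideal.pow_le_pow_right (le_max_left _ _) ha),
      hm a (Ideal.pow_le_pow_right (le_max_right _ _) ha), add_zero]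
  smul_mem' := by
    rintro r x ⟨n, hn⟩
    exact ⟨n, fun a ha => by rw [smul_comm, hn a ha, smul_zero]⟩

variable {𝔞} {M N : Type u} [AddCommGroup M] [Module R M] [AddCommGroup N] [Module R N]

lemma mem_torsionSub {m : M} : m ∈ torsionSub 𝔞 M ↔ ∃ n : ℕ, ∀ a ∈ 𝔞 ^ n, a • m = 0 := Iff.rfl

lemma isTorsionIdeal_torsionSub : IsTorsionIdeal 𝔞 (torsionSub 𝔞 M) := by
  rintro ⟨m, n, hn⟩
  exact ⟨n, fun a ha => Subtype.ext (hn a ha)⟩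

lemma IsTorsionIdeal.of_injective (h : IsTorsionIdeal 𝔞 N) (f : M →ₗ[R] N)
    (hf : Function.Injective f) : IsTorsionIdeal 𝔞 M := fun m => by
  obtain ⟨n, hn⟩ := h (f m)
  exact ⟨n, fun a ha => hf (by rw [map_smul, hn a ha, map_zero])⟩

lemma IsTorsionIdeal.of_surjective (h : IsTorsionIdeal 𝔞 M) (f : M →ₗ[R] N)
    (hf : Function.Surjective f) : IsTorsionIdeal 𝔞 N := fun m => by
  obtain ⟨m, rfl⟩ := hf m
  obtain ⟨n, hn⟩ := h m
  exact ⟨n, fun a ha => by rw [← map_smul, hn a ha, map_zero]⟩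

lemma mem_torsionSub_of_pow_smul_mem [IsNoetherianRing R] {m : M} {n : ℕ}
    (h : ∀ a ∈ 𝔞 ^ n, a • m ∈ torsionSub 𝔞 M) : m ∈ torsionSub 𝔞 M := by
  obtain ⟨s, hs⟩ := (isNoetherianRing_iff_ideal_fg R).1 inferInstance (𝔞 ^ n)
  have h' : ∀ a ∈ s, ∃ k : ℕ, ∀ b ∈ 𝔞 ^ k, b • a • m = 0 := fun a ha =>
    h a (hs ▸ Ideal.subset_span ha)
  choose! k hk using h'
  refine ⟨s.sup k + n, fun c hc => ?_⟩
  rw [pow_add] at hc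
  induction hc using Submodule.smul_induction_on' with
  | smul b hb a ha =>
    rw [smul_eq_mul, mul_smul]
    rw [← hs] at ha
    induction ha using Submodule.span_induction with
    | mem a ha => exact hk a ha b (Ideal.pow_le_pow_right (Finset.le_sup ha) hb)
    | zero => simp
    | add x y _ _ hx hy => rw [add_smul, smul_add, hx, hy, add_zero]
    | smul r x _ hx => rw [smul_assoc, smul_comm, hx, smul_zero]
  | add x _ y _ hx hy => rw [add_smul, hx, hy, add_zero]

lemma torsionSub_quotient_torsionSub [IsNoetherianRing R] :
    torsionSub 𝔞 (M ⧸ torsionSub 𝔞 M) = ⊥ := by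
  rw [eq_bot_iff]
  intro x ⟨n, hn⟩
  obtain ⟨m, rfl⟩ := Submodule.mkQ_surjective _ x
  refine (Submodule.Quotient.mk_eq_zero _).2
    (mem_torsionSub_of_pow_smul_mem (n := n) fun a ha => ?_)
  rw [← Submodule.Quotient.mk_eq_zero]
  exact hn a ha

lemma injective_torsionSub [IsNoetherianRing R] [Module.Injective R M] :
    Module.Injective R (torsionSub 𝔞 M) := by
  apply Module.Baer.injective
  intro J f
  obtain ⟨k, hk⟩ : ∃ k : ℕ, ∀ a ∈ 𝔞 ^ k, ∀ r : J, a • f r = 0 := by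
    obtain ⟨s, hs⟩ := (inferInstance : Module.Finite R J).fg_top
    choose k hk using fun r : J => isTorsionIdeal_torsionSub (f r)
    refine ⟨s.sup k, fun a ha r => ?_⟩
    have hr : r ∈ Submodule.span R (s : Set J) := hs ▸ Submodule.mem_top
    induction hr using Submodule.span_induction with
    | mem r hr => exact hk r a (Ideal.pow_le_pow_right (Finset.le_sup hr) ha)
    | zero => simp
    | add x y _ _ hx hy => rw [map_add, smul_add, hx, hy, add_zero]
    | smul r x _ hx => rw [map_smul, smul_comm, hx, smul_zero]
  obtain ⟨c, hc⟩ := Ideal.exists_pow_inf_eq_pow_smul 𝔞 (M := R) J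
  have hle : ∀ r : J, (r : R) ∈ 𝔞 ^ (k + c) → f r = 0 := by
    have h1 : ∀ r ∈ 𝔞 ^ k • J, ∀ hr : r ∈ J, f ⟨r, hr⟩ = 0 := by
      intro r hr
      induction hr using Submodule.smul_induction_on' with
      | smul a ha r hr =>
        intro _
        have := hk a ha ⟨r, hr⟩
        rw [← map_smul] at this
        exact this
      | add x hx y hy hfx hfy =>
        intro _
        have hx' := Submodule.smul_le_right hx
        have hy' := Submodule.smul_le_right hy
        have := congrArg₂ (· + ·) (hfx hx') (hfy hy')
        simp only [← map_add, add_zero] at this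
        exact this
    rintro ⟨r, hr⟩ hr'
    refine h1 r ?_ hr
    have : r ∈ 𝔞 ^ (k + c) • (⊤ : Submodule R R) ⊓ J := ⟨by simpa using hr', hr⟩
    rw [hc _ (Nat.le_add_left _ _), Nat.add_sub_cancel] at this
    exact Submodule.smul_mono le_rfl inf_le_right this
  let P : Submodule R J := Submodule.comap J.subtype (𝔞 ^ (k + c))
  have hPf : P ≤ LinearMap.ker f := fun r hr => hle r hr
  let i : (J ⧸ P) →ₗ[R] R ⧸ 𝔞 ^ (k + c) := Submodule.mapQ P (𝔞 ^ (k + c)) J.subtype le_rfl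
  have hi : Function.Injective i := by
    rw [← LinearMap.ker_eq_bot, Submodule.ker_mapQ]
    exact Submodule.mkQ_map_self _
  obtain ⟨h, hh⟩ := Module.Injective.out i hi ((torsionSub 𝔞 M).subtype ∘ₗ P.liftQ f hPf)
  have he : h 1 ∈ torsionSub 𝔞 M := ⟨k + c, fun a ha => by
    rw [← map_smul]
    have : a • (1 : R ⧸ 𝔞 ^ (k + c)) = 0 := by
      rw [Algebra.smul_def, mul_one]
      exact Ideal.Quotient.eq_zero_iff_mem.2 ha
    rw [this, map_zero]⟩
  refine ⟨LinearMap.toSpanSingleton R _ ⟨h 1, he⟩, fun x mem => Subtype.ext ?_⟩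
  have h2 := hh (P.mkQ ⟨x, mem⟩)
  have h3 : i (P.mkQ ⟨x, mem⟩) = x • (1 : R ⧸ 𝔞 ^ (k + c)) := by
    rw [Algebra.smul_def, mul_one]
    rfl
  rw [h3, map_smul] at h2
  exact h2

lemma injective_quotient_torsionSub [IsNoetherianRing R] [Module.Injective R M] :
    Module.Injective R (M ⧸ torsionSub 𝔞 M) := by
  have := injective_torsionSub (𝔞 := 𝔞) (M := M)
  obtain ⟨r, hr⟩ := Module.Injective.out (torsionSub 𝔞 M).subtype (Submodule.injective_subtype _)
    LinearMap.id
  let s : (M ⧸ torsionSub 𝔞 M) →ₗ[R] M :=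
    (torsionSub 𝔞 M).liftQ (LinearMap.id - (torsionSub 𝔞 M).subtype ∘ₗ r) (fun x hx => by
      have := hr ⟨x, hx⟩
      simp at this
      simp [this])
  have hs : ∀ x, (torsionSub 𝔞 M).mkQ (s x) = x := by
    intro x
    obtain ⟨m, rfl⟩ := Submodule.mkQ_surjective _ x
    simp [s]
  refine ⟨fun X Y _ _ _ _ f hf g => ?_⟩
  obtain ⟨h, hh⟩ := Module.Injective.out f hf (s ∘ₗ g)
  exact ⟨(torsionSub 𝔞 M).mkQ ∘ₗ h, fun x => by
    rw [LinearMap.comp_apply, hh, LinearMap.comp_apply, hs]⟩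

variable (R M) in
lemma exists_injective_module_embedding : ∃ (E : ModuleCat.{u} R) (_ : Module.Injective R E)
    (f : M →ₗ[R] E), Function.Injective f := by
  refine ⟨Injective.under (ModuleCat.of R M), ?_, (Injective.ι (ModuleCat.of R M)).hom,
    (ModuleCat.mono_iff_injective _).1 inferInstance⟩
  have : CategoryTheory.Injective (Injective.under (ModuleCat.of R M)) :=
    Injective.injective_under (ModuleCat.of R M)
  exact (Module.injective_iff_injective_object R
    (Injective.under (ModuleCat.of R M) : ModuleCat.{u} R)).2 this

lemma exists_torsion_injective_embedding [IsNoetherianRing R] (h : IsTorsionIdeal 𝔞 M) :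
    ∃ (E : ModuleCat.{u} R) (_ : Module.Injective R E) (f : M →ₗ[R] E), Function.Injective f ∧
      IsTorsionIdeal 𝔞 E := by
  obtain ⟨E, _, f, hf⟩ := exists_injective_module_embedding R M
  refine ⟨ModuleCat.of R (torsionSub 𝔞 E), injective_torsionSub, f.codRestrict _ (fun m => ?_),
    fun x y hxy => hf (congrArg Subtype.val hxy), isTorsionIdeal_torsionSub⟩
  obtain ⟨n, hn⟩ := h m
  exact ⟨n, fun a ha => by rw [← map_smul, hn a ha, map_zero]⟩

lemma exists_torsionFree_injective_embedding [IsNoetherianRing R] (h : torsionSub 𝔞 M = ⊥) :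
    ∃ (E : ModuleCat.{u} R) (_ : Module.Injective R E) (f : M →ₗ[R] E), Function.Injective f ∧
      torsionSub 𝔞 E = ⊥ := by
  obtain ⟨E, _, f, hf⟩ := exists_injective_module_embedding R M
  refine ⟨ModuleCat.of R (E ⧸ torsionSub 𝔞 E), injective_quotient_torsionSub,
    (torsionSub 𝔞 E).mkQ ∘ₗ f, ?_, torsionSub_quotient_torsionSub⟩
  rw [← LinearMap.ker_eq_bot, eq_bot_iff]
  intro x hx
  rw [← h]
  obtain ⟨n, hn⟩ :=
    (Submodule.Quotient.mk_eq_zero _).1 (show Submodule.Quotient.mk (f x) = 0 from hx)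
  exact ⟨n, fun a ha => hf (by rw [map_smul, hn a ha, map_zero])⟩

end Torsion

noncomputable section ExtSequence

variable {R : Type u} [CommRing R]

/-- Postcomposition on `Ext`, as a linear map. -/
def extPost {M M' : ModuleCat.{u} R} (g : M ⟶ M') (X : ModuleCat.{u} R) (i : ℕ) :
    Abelian.Ext X M i →ₗ[R] Abelian.Ext X M' i :=
  (Abelian.Ext.mk₀ g).postcompOfLinear R X (add_zero i)

lemma extPost_apply {M M' : ModuleCat.{u} R} (g : M ⟶ M') (X : ModuleCat.{u} R) (i : ℕ)
    (x : Abelian.Ext X M i) : extPost g X i x = x.comp (Abelian.Ext.mk₀ g) (add_zero i) := rfl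

lemma extPost_extPost {M M' M'' : ModuleCat.{u} R} (g : M ⟶ M') (g' : M' ⟶ M'')
    (X : ModuleCat.{u} R) (i : ℕ) (x : Abelian.Ext X M i) :
    extPost g' X i (extPost g X i x) = extPost (g ≫ g') X i x := by
  simp only [extPost_apply]
  rw [Abelian.Ext.comp_assoc_of_second_deg_zero, Abelian.Ext.mk₀_comp_mk₀]

variable {S : ShortComplex (ModuleCat.{u} R)} (hS : S.ShortExact)

/-- The covariant connecting homomorphism on `Ext`, as a linear map. -/
def extDelta (X : ModuleCat.{u} R) (i : ℕ) :
    Abelian.Ext X S.X₃ i →ₗ[R] Abelian.Ext X S.X₁ (i + 1) :=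
  hS.extClass.postcompOfLinear R X rfl

lemma extDelta_apply (X : ModuleCat.{u} R) (i : ℕ) (x : Abelian.Ext X S.X₃ i) :
    extDelta hS X i x = x.comp hS.extClass rfl := rfl

include hS in
lemma exact_extPost (X : ModuleCat.{u} R) (i : ℕ) :
    Function.Exact (extPost S.f X i) (extPost S.g X i) := by
  intro x
  refine ⟨fun h => Abelian.Ext.covariant_sequence_exact₂ X hS x h, ?_⟩
  rintro ⟨y, rfl⟩
  rw [extPost_extPost, S.zero, extPost_apply, Abelian.Ext.mk₀_zero, Abelian.Ext.comp_zero]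

lemma exact_extPost_extDelta (X : ModuleCat.{u} R) (i : ℕ) :
    Function.Exact (extPost S.g X i) (extDelta hS X i) := by
  intro x
  refine ⟨fun h => Abelian.Ext.covariant_sequence_exact₃ X hS x rfl h, ?_⟩
  rintro ⟨y, rfl⟩
  rw [extPost_apply, extDelta_apply, Abelian.Ext.comp_assoc_of_second_deg_zero, hS.comp_extClass,
    Abelian.Ext.comp_zero]

lemma exact_extDelta_extPost (X : ModuleCat.{u} R) (i : ℕ) :
    Function.Exact (extDelta hS X i) (extPost S.f X (i + 1)) := by
  intro x
  refine ⟨fun h => Abelian.Ext.covariant_sequence_exact₁ X hS x h rfl, ?_⟩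
  rintro ⟨y, rfl⟩
  rw [extPost_apply, extDelta_apply, Abelian.Ext.comp_assoc_of_third_deg_zero, hS.extClass_comp,
    Abelian.Ext.comp_zero]

include hS in
lemma extPost_injective (X : ModuleCat.{u} R) : Function.Injective (extPost S.f X 0) := by
  have := hS.mono_f
  exact Abelian.Ext.postcomp_mk₀_injective_of_mono X S.f

variable (𝔞 : Ideal R)

lemma extPost_extRes {M M' : ModuleCat.{u} R} (g : M ⟶ M') (i : ℕ) {n m : ℕ} (h : n ≤ m)
    (x : Abelian.Ext (quotPow 𝔞 n) M i) :
    extPost g _ i (extRes 𝔞 M i h x) = extRes 𝔞 M' i h (extPost g _ i x) := by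
  rw [extPost_apply, extRes_apply, extRes_apply, extPost_apply,
    Abelian.Ext.comp_assoc_of_third_deg_zero]

lemma extDelta_extRes (i : ℕ) {n m : ℕ} (h : n ≤ m) (x : Abelian.Ext (quotPow 𝔞 n) S.X₃ i) :
    extDelta hS _ i (extRes 𝔞 S.X₃ i h x) = extRes 𝔞 S.X₁ (i + 1) h (extDelta hS _ i x) := by
  rw [extDelta_apply, extRes_apply, extRes_apply, extDelta_apply]
  exact Abelian.Ext.comp_assoc _ _ _ (zero_add i) rfl (by lia)

/-- A linear map out of local cohomology from a compatible family. -/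
lemma exists_linearMap_lc {M : ModuleCat.{u} R} {i : ℕ} {H : Type*} [AddCommGroup H] [Module R H]
    (g : ∀ n, Abelian.Ext (quotPow 𝔞 n) M i →ₗ[R] H)
    (hg : ∀ n m (h : n ≤ m) x, g m (extRes 𝔞 M i h x) = g n x) :
    ∃ φ : (localCohomology 𝔞 i).obj M →ₗ[R] H, ∀ n x, φ (lcι 𝔞 M i n x) = g n x := by
  choose d r hr using exists_lcι_eq 𝔞 M i
  have well : ∀ n m x y, lcι 𝔞 M i n x = lcι 𝔞 M i m y → g n x = g m y := by
    intro n m x y h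
    rw [← lcι_extRes 𝔞 M i (le_max_left n m), ← lcι_extRes 𝔞 M i (le_max_right n m) y,
      ← sub_eq_zero, ← map_sub] at h
    obtain ⟨k, hk, h⟩ := lcι_eq_zero 𝔞 M i h
    have := hg _ _ hk (extRes 𝔞 M i (le_max_left n m) x - extRes 𝔞 M i (le_max_right n m) y)
    rw [h, map_zero, map_sub, hg, hg, eq_comm, sub_eq_zero] at this
    exact this
  refine ⟨{ toFun := fun y => g _ (r y), map_add' := fun y z => ?_, map_smul' := fun a y => ?_ },
    fun n x => well _ _ _ _ (hr _)⟩
  · rw [← hg _ _ (le_max_left (d y) (d z)), ← hg _ _ (le_max_right (d y) (d z)), ← map_add]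
    apply well
    rw [map_add, lcι_extRes, lcι_extRes, hr, hr, hr]
  · rw [RingHom.id_apply, ← map_smul]
    apply well
    rw [map_smul, hr, hr]

lemma nonempty_lc_equiv {M M' : ModuleCat.{u} R} {i i' : ℕ}
    (f : ∀ X : ModuleCat.{u} R, Abelian.Ext X M i →ₗ[R] Abelian.Ext X M' i')
    (hf : ∀ n m (h : n ≤ m) x, f _ (extRes 𝔞 M i h x) = extRes 𝔞 M' i' h (f _ x))
    (inj : ∀ n (x : Abelian.Ext (quotPow 𝔞 n) M i), f _ x = 0 →
      ∃ (m : ℕ) (h : n ≤ m), extRes 𝔞 M i h x = 0)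
    (surj : ∀ n (y : Abelian.Ext (quotPow 𝔞 n) M' i'), ∃ (m : ℕ) (h : n ≤ m),
      ∃ x : Abelian.Ext (quotPow 𝔞 m) M i, f _ x = extRes 𝔞 M' i' h y) :
    Nonempty ((localCohomology 𝔞 i).obj M ≃ₗ[R] (localCohomology 𝔞 i').obj M') := by
  obtain ⟨φ, hφ⟩ := exists_linearMap_lc 𝔞 (M := M) (i := i)
    (fun n => lcι 𝔞 M' i' n ∘ₗ f (quotPow 𝔞 n))
    (fun n m h x => by simp [hf, lcι_extRes])
  refine ⟨LinearEquiv.ofBijective φ ⟨?_, ?_⟩⟩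
  · rw [← LinearMap.ker_eq_bot, eq_bot_iff]
    intro y hy
    obtain ⟨n, x, rfl⟩ := exists_lcι_eq 𝔞 M i y
    rw [LinearMap.mem_ker, hφ, LinearMap.comp_apply] at hy
    obtain ⟨m, h, hm⟩ := lcι_eq_zero 𝔞 M' i' hy
    rw [← hf] at hm
    obtain ⟨k, hk, hx⟩ := inj _ _ hm
    rw [Submodule.mem_bot, ← lcι_extRes 𝔞 M i h, ← lcι_extRes 𝔞 M i hk, hx, map_zero]
  · intro y
    obtain ⟨n, y, rfl⟩ := exists_lcι_eq 𝔞 M' i' y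
    obtain ⟨m, h, x, hx⟩ := surj n y
    exact ⟨lcι 𝔞 M i m x, by rw [hφ, LinearMap.comp_apply, hx, lcι_extRes]⟩

end ExtSequence

noncomputable section LocalCohomologyTorsion

variable {R : Type u} [CommRing R] (𝔞 : Ideal R)

lemma smul_ext_eq_zero {X M : ModuleCat.{u} R} {a : R} (ha : ∀ x : X, a • x = 0) {i : ℕ}
    (e : Abelian.Ext X M i) : a • e = 0 := by
  have h : a • 𝟙 X = 0 := by
    ext x
    exact ha x
  have : a • e = (Abelian.Ext.mk₀ (a • 𝟙 X)).comp e (zero_add i) := by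
    rw [Abelian.Ext.mk₀_smul, Abelian.Ext.smul_comp, Abelian.Ext.mk₀_id_comp]
  rw [this, h, Abelian.Ext.mk₀_zero, Abelian.Ext.zero_comp]

lemma quotPow_smul_eq_zero {n : ℕ} {a : R} (ha : a ∈ 𝔞 ^ n) (x : quotPow 𝔞 n) : a • x = 0 := by
  obtain ⟨r, rfl⟩ := Ideal.Quotient.mk_surjective x
  exact Ideal.Quotient.eq_zero_iff_mem.2 (Ideal.mul_mem_right r _ ha)

variable {𝔞} in
lemma quotPow_hom_ext {n : ℕ} {M : ModuleCat.{u} R} {f g : quotPow 𝔞 n ⟶ M}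
    (h : f (1 : R ⧸ 𝔞 ^ n) = g (1 : R ⧸ 𝔞 ^ n)) : f = g :=
  ModuleCat.hom_ext (Submodule.linearMap_qext _ (LinearMap.ext_ring h))

lemma isTorsionIdeal_lc (M : ModuleCat.{u} R) (i : ℕ) :
    IsTorsionIdeal 𝔞 ((localCohomology 𝔞 i).obj M) := fun y => by
  obtain ⟨n, x, rfl⟩ := exists_lcι_eq 𝔞 M i y
  exact ⟨n, fun a ha => by
    rw [← map_smul, smul_ext_eq_zero (quotPow_smul_eq_zero 𝔞 ha), map_zero]⟩

variable {𝔞}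

lemma subsingleton_ext_of_torsionFree {X E : ModuleCat.{u} R} {n : ℕ}
    (hX : ∀ a ∈ 𝔞 ^ n, ∀ x : X, a • x = 0) (hE : torsionSub 𝔞 E = ⊥) :
    Subsingleton (Abelian.Ext X E 0) := by
  refine subsingleton_of_forall_eq 0 fun e => ?_
  obtain ⟨f, rfl⟩ := (Abelian.Ext.mk₀_bijective X E).2 e
  rw [Abelian.Ext.mk₀_eq_zero_iff]
  ext x
  have : f x ∈ torsionSub 𝔞 E := ⟨n, fun a ha => by rw [← map_smul, hX a ha, map_zero]⟩
  rw [hE] at this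
  exact this

section

variable {S : ShortComplex (ModuleCat.{u} R)} (hS : S.ShortExact)

lemma extDelta_bijective [Module.Injective R S.X₂] (h2 : torsionSub 𝔞 S.X₂ = ⊥)
    {X : ModuleCat.{u} R} {n : ℕ} (hX : ∀ a ∈ 𝔞 ^ n, ∀ x : X, a • x = 0) (i : ℕ) :
    Function.Bijective (extDelta hS X i) := by
  have inj2 : CategoryTheory.Injective S.X₂ :=
    (Module.injective_iff_injective_object R S.X₂).1 inferInstance
  have hsub : Subsingleton (Abelian.Ext X S.X₂ i) := by
    cases i with
    | zero => exact subsingleton_ext_of_torsionFree hX h2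
    | succ i => exact subsingleton_of_forall_eq 0 Abelian.Ext.eq_zero_of_injective
  constructor
  · rw [← LinearMap.ker_eq_bot, eq_bot_iff]
    intro x hx
    obtain ⟨y, rfl⟩ := (exact_extPost_extDelta hS X i x).1 hx
    rw [Subsingleton.elim y 0, map_zero]
    exact Submodule.zero_mem _
  · intro y
    exact (exact_extDelta_extPost hS X i y).1 (Abelian.Ext.eq_zero_of_injective _)

include hS in
lemma nonempty_lc_equiv_of_injective [Module.Injective R S.X₂] (h2 : torsionSub 𝔞 S.X₂ = ⊥)
    (i : ℕ) : Nonempty ((localCohomology 𝔞 i).obj S.X₃ ≃ₗ[R]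
      (localCohomology 𝔞 (i + 1)).obj S.X₁) := by
  have hX (n : ℕ) := extDelta_bijective hS h2 (fun a ha x => quotPow_smul_eq_zero 𝔞 (n := n) ha x) i
  refine nonempty_lc_equiv 𝔞 (fun X => extDelta hS X i)
    (fun n m h x => extDelta_extRes hS 𝔞 i h x) (fun n x hx => ⟨n, le_rfl, ?_⟩)
    (fun n y => ⟨n, le_rfl, (hX n).2 _⟩)
  rw [(hX n).1 (hx.trans (map_zero _).symm), map_zero]

end

/-- Classes of positive degree with torsion coefficients die in the limit. -/
lemma exists_extRes_eq_zero_of_torsion [IsNoetherianRing R] (i : ℕ) :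
    ∀ (T : ModuleCat.{u} R) (_ : IsTorsionIdeal 𝔞 T) (n : ℕ)
      (x : Abelian.Ext (quotPow 𝔞 n) T (i + 1)),
      ∃ (m : ℕ) (h : n ≤ m), extRes 𝔞 T (i + 1) h x = 0 := by
  induction i with
  | zero =>
    intro T hT n x
    obtain ⟨J, _, f, hf, hJ⟩ := exists_torsion_injective_embedding hT
    have hS : (ModuleCat.shortComplexOfCompEqZero f (LinearMap.range f).mkQ
        (LinearMap.range_mkQ_comp f)).ShortExact :=
      ModuleCat.shortComplex_shortExact _ (LinearMap.exact_map_mkQ_range f) hf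
        (Submodule.mkQ_surjective _)
    have inj2 : CategoryTheory.Injective (ModuleCat.of R J) :=
      (Module.injective_iff_injective_object R J).1 inferInstance
    obtain ⟨y, rfl⟩ := (exact_extDelta_extPost hS _ 0 x).1 (Abelian.Ext.eq_zero_of_injective _)
    obtain ⟨g, rfl⟩ := (Abelian.Ext.mk₀_bijective _ _).2 y
    obtain ⟨j, hj⟩ := Submodule.mkQ_surjective _ (g (1 : R ⧸ 𝔞 ^ n))
    obtain ⟨k, hk⟩ := hJ j
    refine ⟨max n k, le_max_left _ _, ?_⟩
    let g' : quotPow 𝔞 (max n k) ⟶ ModuleCat.of R J := ModuleCat.ofHom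
      ((𝔞 ^ max n k).liftQ (LinearMap.toSpanSingleton R J j) (fun a ha =>
        hk a (Ideal.pow_le_pow_right (le_max_right _ _) ha)))
    refine (extDelta_extRes hS 𝔞 0 _ _).symm.trans
      ((exact_extPost_extDelta hS _ 0 _).2 ⟨Abelian.Ext.mk₀ g', ?_⟩)
    refine (Abelian.Ext.mk₀_comp_mk₀ _ _).trans
      (Eq.trans ?_ (Abelian.Ext.mk₀_comp_mk₀ _ _).symm)
    refine congrArg _ (quotPow_hom_ext ?_)
    exact (congrArg _ (one_smul R j)).trans hj
  | succ i ih =>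
    intro T hT n x
    obtain ⟨J, _, f, hf, hJ⟩ := exists_torsion_injective_embedding hT
    have hS : (ModuleCat.shortComplexOfCompEqZero f (LinearMap.range f).mkQ
        (LinearMap.range_mkQ_comp f)).ShortExact :=
      ModuleCat.shortComplex_shortExact _ (LinearMap.exact_map_mkQ_range f) hf
        (Submodule.mkQ_surjective _)
    have inj2 : CategoryTheory.Injective (ModuleCat.of R J) :=
      (Module.injective_iff_injective_object R J).1 inferInstance
    obtain ⟨y, rfl⟩ := (exact_extDelta_extPost hS _ (i + 1) x).1
      (Abelian.Ext.eq_zero_of_injective _)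
    obtain ⟨m, h, hm⟩ :=
      ih _ (hJ.of_surjective _ (Submodule.mkQ_surjective (LinearMap.range f))) n y
    refine ⟨m, h, ?_⟩
    exact (extDelta_extRes hS 𝔞 _ h y).symm.trans <| (congrArg _ hm).trans (map_zero _)

lemma nonempty_lc_quotient_torsionSub_equiv [IsNoetherianRing R] (M : ModuleCat.{u} R) (i : ℕ) :
    Nonempty ((localCohomology 𝔞 (i + 1)).obj M ≃ₗ[R]
      (localCohomology 𝔞 (i + 1)).obj (ModuleCat.of R (M ⧸ torsionSub 𝔞 M))) := by
  have hS : (ModuleCat.shortComplexOfCompEqZero (torsionSub 𝔞 M).subtype (torsionSub 𝔞 M).mkQ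
      (by ext x; simp)).ShortExact :=
    ModuleCat.shortComplex_shortExact _ (LinearMap.exact_subtype_mkQ _)
      (Submodule.injective_subtype _) (Submodule.mkQ_surjective _)
  refine nonempty_lc_equiv 𝔞 (M := M)
    (fun X => extPost (ModuleCat.ofHom (torsionSub 𝔞 M).mkQ) X (i + 1))
    (fun n m h x => extPost_extRes 𝔞 _ _ h x) (fun n x hx => ?_) (fun n y => ?_)
  · obtain ⟨y, rfl⟩ := (exact_extPost hS _ (i + 1) x).1 hx
    obtain ⟨m, h, hy⟩ := exists_extRes_eq_zero_of_torsion i _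
      (isTorsionIdeal_torsionSub (𝔞 := 𝔞) (M := M)) n y
    exact ⟨m, h, (extPost_extRes 𝔞 _ _ h y).symm.trans ((congrArg _ hy).trans (map_zero _))⟩
  · obtain ⟨m, h, hy⟩ := exists_extRes_eq_zero_of_torsion (i + 1) _
      (isTorsionIdeal_torsionSub (𝔞 := 𝔞) (M := M)) n (extDelta hS _ _ y)
    rw [← extDelta_extRes] at hy
    exact ⟨m, h, (exact_extPost_extDelta hS _ _ _).1 hy⟩

lemma nonempty_lc_zero_equiv (M : ModuleCat.{u} R) :
    Nonempty ((localCohomology 𝔞 0).obj M ≃ₗ[R] torsionSub 𝔞 M) := by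
  let ev (n : ℕ) : Abelian.Ext (quotPow 𝔞 n) M 0 →ₗ[R] M :=
    LinearMap.applyₗ (1 : R ⧸ 𝔞 ^ n) ∘ₗ ModuleCat.homLinearEquiv.toLinearMap ∘ₗ
      Abelian.Ext.linearEquiv₀.toLinearMap
  have ev_mk₀ (n : ℕ) (f : quotPow 𝔞 n ⟶ M) : ev n (Abelian.Ext.mk₀ f) = f (1 : R ⧸ 𝔞 ^ n) := by
    have : Abelian.Ext.linearEquiv₀ (R := R) (Abelian.Ext.mk₀ f) = f := by
      rw [← Abelian.Ext.linearEquiv₀_symm_apply (R := R), LinearEquiv.apply_symm_apply]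
    simp [ev, this]
    rfl
  have hev (n x) : ev n x ∈ torsionSub 𝔞 M := ⟨n, fun a ha => by
    rw [← map_smul, smul_ext_eq_zero (quotPow_smul_eq_zero 𝔞 ha), map_zero]⟩
  obtain ⟨φ, hφ⟩ := exists_linearMap_lc 𝔞 (M := M) (i := 0)
    (fun n => (ev n).codRestrict _ (hev n)) (fun n m h x => by
      obtain ⟨f, rfl⟩ := (Abelian.Ext.mk₀_bijective _ _).2 x
      apply Subtype.ext
      change ev m _ = ev n _
      rw [extRes_apply, Abelian.Ext.mk₀_comp_mk₀, ev_mk₀, ev_mk₀]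
      rfl)
  refine ⟨LinearEquiv.ofBijective φ ⟨?_, ?_⟩⟩
  · rw [← LinearMap.ker_eq_bot, eq_bot_iff]
    intro y hy
    obtain ⟨n, x, rfl⟩ := exists_lcι_eq 𝔞 M 0 y
    obtain ⟨f, rfl⟩ := (Abelian.Ext.mk₀_bijective _ _).2 x
    rw [LinearMap.mem_ker, hφ] at hy
    have h1 : f (1 : R ⧸ 𝔞 ^ n) = 0 := (ev_mk₀ n f).symm.trans (congrArg Subtype.val hy)
    have : f = 0 := quotPow_hom_ext h1
    rw [this, Abelian.Ext.mk₀_zero, map_zero]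
    exact Submodule.zero_mem _
  · rintro ⟨m, n, hn⟩
    let g : quotPow 𝔞 n ⟶ M := ModuleCat.ofHom
      ((𝔞 ^ n).liftQ (LinearMap.toSpanSingleton R M m) hn)
    refine ⟨lcι 𝔞 M 0 n (Abelian.Ext.mk₀ g), ?_⟩
    rw [hφ]
    apply Subtype.ext
    refine (ev_mk₀ n g).trans ?_
    exact one_smul R m

end LocalCohomologyTorsion

noncomputable section ExtFinite

variable {R : Type u} [CommRing R]

/-- The `R`-module `Ext^i_R(R/𝔞, T)` is finitely generated. -/
def ExtFinite (𝔞 : Ideal R) (i : ℕ) (T : Type u) [AddCommGroup T] [Module R T] : Prop :=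
  Module.Finite R (Abelian.Ext (ModuleCat.of R (R ⧸ 𝔞)) (ModuleCat.of R T) i)

lemma extFinite_iff_finite_extIdeal {𝔞 : Ideal R} {i : ℕ} {M : ModuleCat.{u} R} :
    ExtFinite 𝔞 i M ↔ Module.Finite R (extIdeal 𝔞 i M) :=
  Module.Finite.equiv_iff (extEquiv (ModuleCat.of R (R ⧸ 𝔞)) M i).symm

lemma Module.Finite.of_exact_of_isNoetherianRing [IsNoetherianRing R] {A B C : Type*}
    [AddCommGroup A] [Module R A] [AddCommGroup B] [Module R B] [AddCommGroup C] [Module R C]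
    [Module.Finite R A] [Module.Finite R C] {f : A →ₗ[R] B} {g : B →ₗ[R] C}
    (h : Function.Exact f g) : Module.Finite R B :=
  have := isNoetherian_of_isNoetherianRing_of_finite R A
  have := isNoetherian_of_isNoetherianRing_of_finite R C
  have := isNoetherian_of_range_eq_ker f g h.linearMap_ker_eq.symm
  inferInstance

section

variable [IsNoetherianRing R] {𝔞 : Ideal R} {A B C : Type u} [AddCommGroup A] [Module R A]
  [AddCommGroup B] [Module R B] [AddCommGroup C] [Module R C]
  {f : A →ₗ[R] B} {g : B →ₗ[R] C}

omit [IsNoetherianRing R] in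
lemma shortExact_of_exact (hf : Function.Injective f) (hg : Function.Surjective g)
    (h : Function.Exact f g) :
    (ModuleCat.shortComplexOfCompEqZero f g h.linearMap_comp_eq_zero).ShortExact :=
  ModuleCat.shortComplex_shortExact _ h hf hg

lemma ExtFinite.middle (hf : Function.Injective f) (hg : Function.Surjective g)
    (h : Function.Exact f g) {i : ℕ} (hA : ExtFinite 𝔞 i A) (hC : ExtFinite 𝔞 i C) :
    ExtFinite 𝔞 i B := by
  unfold ExtFinite at *
  exact .of_exact_of_isNoetherianRing (exact_extPost (shortExact_of_exact hf hg h) _ i)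

lemma ExtFinite.right (hf : Function.Injective f) (hg : Function.Surjective g)
    (h : Function.Exact f g) {i : ℕ} (hB : ExtFinite 𝔞 i B) (hA : ExtFinite 𝔞 (i + 1) A) :
    ExtFinite 𝔞 i C := by
  unfold ExtFinite at *
  exact .of_exact_of_isNoetherianRing (exact_extPost_extDelta (shortExact_of_exact hf hg h) _ i)

lemma ExtFinite.left_succ (hf : Function.Injective f) (hg : Function.Surjective g)
    (h : Function.Exact f g) {i : ℕ} (hC : ExtFinite 𝔞 i C) (hB : ExtFinite 𝔞 (i + 1) B) :
    ExtFinite 𝔞 (i + 1) A := by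
  unfold ExtFinite at *
  exact .of_exact_of_isNoetherianRing (exact_extDelta_extPost (shortExact_of_exact hf hg h) _ i)

lemma ExtFinite.of_injective (hf : Function.Injective f) (hB : ExtFinite 𝔞 0 B) :
    ExtFinite 𝔞 0 A := by
  unfold ExtFinite at *
  have := isNoetherian_of_isNoetherianRing_of_finite R
    (Abelian.Ext (ModuleCat.of R (R ⧸ 𝔞)) (ModuleCat.of R B) 0)
  exact .of_injective _ (extPost_injective (shortExact_of_exact hf
    (Submodule.mkQ_surjective _) (LinearMap.exact_map_mkQ_range f)) (ModuleCat.of R (R ⧸ 𝔞)))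

omit [IsNoetherianRing R] in
lemma ExtFinite.of_linearEquiv (e : A ≃ₗ[R] B) {i : ℕ} (hA : ExtFinite 𝔞 i A) :
    ExtFinite 𝔞 i B := by
  unfold ExtFinite at *
  have : IsIso (ModuleCat.ofHom e.toLinearMap) := e.toModuleIso.isIso_hom
  refine .of_surjective (extPost (ModuleCat.ofHom e.toLinearMap) _ i) fun x =>
    ⟨extPost (inv (ModuleCat.ofHom e.toLinearMap)) _ i x, ?_⟩
  rw [extPost_extPost, IsIso.inv_hom_id, extPost_apply, Abelian.Ext.comp_mk₀_id]

lemma ExtFinite.of_finite (𝔞 : Ideal R) (T : Type u) [AddCommGroup T] [Module R T]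
    [Module.Finite R T] (i : ℕ) : ExtFinite 𝔞 i T :=
  ModuleCat.finite_ext R _ _ i

end

section

variable [IsNoetherianRing R] {𝔞 : Ideal R} {T : Type u} [AddCommGroup T] [Module R T]

/-- If `Hom(R/𝔞, T)` is finitely generated, so is every submodule of `T` killed by `𝔞`. -/
lemma finite_of_extFinite_zero (h : ExtFinite 𝔞 0 T) {V : Submodule R T}
    (hV : ∀ a ∈ 𝔞, ∀ v ∈ V, a • v = 0) : V.FG := by
  rw [← Module.Finite.iff_fg]
  unfold ExtFinite at h
  have := isNoetherian_of_isNoetherianRing_of_finite R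
    (Abelian.Ext (ModuleCat.of R (R ⧸ 𝔞)) (ModuleCat.of R T) 0)
  let ev : Abelian.Ext (ModuleCat.of R (R ⧸ 𝔞)) (ModuleCat.of R T) 0 →ₗ[R] T :=
    LinearMap.applyₗ (1 : R ⧸ 𝔞) ∘ₗ ModuleCat.homLinearEquiv.toLinearMap ∘ₗ
      Abelian.Ext.linearEquiv₀.toLinearMap
  have hle : V ≤ LinearMap.range ev := fun v hv => by
    let g : ModuleCat.of R (R ⧸ 𝔞) ⟶ ModuleCat.of R T := ModuleCat.ofHom
      (𝔞.liftQ (LinearMap.toSpanSingleton R T v) fun a ha => hV a ha v hv)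
    refine ⟨Abelian.Ext.mk₀ g, ?_⟩
    have : Abelian.Ext.linearEquiv₀ (R := R) (Abelian.Ext.mk₀ g) = g := by
      rw [← Abelian.Ext.linearEquiv₀_symm_apply (R := R), LinearEquiv.apply_symm_apply]
    simp only [ev, LinearMap.comp_apply, LinearEquiv.coe_coe, this]
    exact one_smul R v
  exact .of_injective (Submodule.inclusion hle) (Submodule.inclusion_injective hle)

lemma ExtFinite.of_smul_eq_zero (h : ExtFinite 𝔞 0 T) (hT : ∀ a ∈ 𝔞, ∀ v : T, a • v = 0) (i : ℕ) :
    ExtFinite 𝔞 i T := by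
  have : Module.Finite R T := ⟨finite_of_extFinite_zero h (fun a ha v _ => hT a ha v)⟩
  exact .of_finite 𝔞 T i

/-- Melkersson's criterion: finiteness of `Ext` can be tested on the kernel and cokernel of
multiplication by an element of the ideal. -/
lemma ExtFinite.of_ker_of_coker {x : R} (hx : x ∈ 𝔞)
    (hK : ∀ i, ExtFinite 𝔞 i (LinearMap.ker (LinearMap.lsmul R T x)))
    (hC : ∀ i, ExtFinite 𝔞 i (T ⧸ LinearMap.range (LinearMap.lsmul R T x))) (i : ℕ) :
    ExtFinite 𝔞 i T := by
  let μ := LinearMap.lsmul R T x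
  let X := ModuleCat.of R (R ⧸ 𝔞)
  have hS := shortExact_of_exact (Submodule.injective_subtype (LinearMap.ker μ))
    μ.surjective_rangeRestrict (by
      rw [LinearMap.exact_iff, Submodule.range_subtype, LinearMap.ker_rangeRestrict])
  have hS' := shortExact_of_exact (Submodule.injective_subtype (LinearMap.range μ))
    (Submodule.mkQ_surjective _) (LinearMap.exact_subtype_mkQ _)
  have hzero (e : Abelian.Ext X (ModuleCat.of R T) i) :
      extPost (ModuleCat.ofHom (LinearMap.range μ).subtype) X i
        (extPost (ModuleCat.ofHom μ.rangeRestrict) X i e) = 0 := by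
    have h1 : ModuleCat.ofHom μ.rangeRestrict ≫ ModuleCat.ofHom (LinearMap.range μ).subtype =
        x • 𝟙 (ModuleCat.of R T) := rfl
    rw [extPost_extPost, h1, extPost_apply, ← Abelian.Ext.smul_eq_comp_mk₀]
    refine smul_ext_eq_zero (fun y => ?_) e
    obtain ⟨r, rfl⟩ := Ideal.Quotient.mk_surjective y
    exact Ideal.Quotient.eq_zero_iff_mem.2 (Ideal.mul_mem_right r _ hx)
  have hfin : Module.Finite R
      (LinearMap.ker (extPost (ModuleCat.ofHom (LinearMap.range μ).subtype) X i)) := by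
    cases i with
    | zero =>
      rw [LinearMap.ker_eq_bot.2 (extPost_injective hS' X)]
      infer_instance
    | succ i =>
      rw [LinearMap.exact_iff.1 (exact_extDelta_extPost hS' X i)]
      have : Module.Finite R (Abelian.Ext X
        (ModuleCat.of R (T ⧸ LinearMap.range (LinearMap.lsmul R T x))) i) := hC i
      exact Module.Finite.range (extDelta hS' X i)
  have : Module.Finite R (Abelian.Ext X (ModuleCat.of R (LinearMap.ker μ)) i) := hK i
  refine Module.Finite.of_exact_of_isNoetherianRing (f := extPost (ModuleCat.ofHom
    (LinearMap.ker μ).subtype) X i)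
    (g := (extPost (ModuleCat.ofHom μ.rangeRestrict) X i).codRestrict
      (LinearMap.ker (extPost (ModuleCat.ofHom (LinearMap.range μ).subtype) X i)) hzero) fun e => ?_
  rw [← exact_extPost hS X i e, Subtype.ext_iff]
  rfl

end

end ExtFinite

section Artinian

/-- A module that is torsion for `x` and whose `x`-socle is Artinian is Artinian. -/
lemma isArtinian_of_ker_smul {A T : Type*} [CommRing A] [AddCommGroup T] [Module A T] (x : A)
    (hx : ∀ t : T, ∃ k : ℕ, x ^ k • t = 0)
    (h : IsArtinian A (LinearMap.ker (LinearMap.lsmul A T x))) :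
    IsArtinian A T := by
  rw [← monotone_stabilizes_iff_artinian]
  intro F
  let f (n : ℕ) : Submodule A T := OrderDual.ofDual (F n)
  have hf {n m : ℕ} (hnm : n ≤ m) {t : T} (ht : t ∈ f m) : t ∈ f n := F.monotone hnm ht
  let L (n k : ℕ) : Submodule A (LinearMap.ker (LinearMap.lsmul A T x)) :=
    ((f n ⊓ LinearMap.ker (LinearMap.lsmul A T (x ^ (k + 1)))).map
      (LinearMap.lsmul A T (x ^ k))).comap (Submodule.subtype _)
  have mem_L (n k : ℕ) (z) : z ∈ L n k ↔ ∃ t ∈ f n, x ^ (k + 1) • t = 0 ∧ x ^ k • t = z.1 := by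
    simp [L, and_assoc]
  have hL {n m k l : ℕ} (hnm : n ≤ m) (hkl : k ≤ l) : L m l ≤ L n k := by
    intro z hz
    rw [mem_L] at hz ⊢
    obtain ⟨t, ht, h0, hz⟩ := hz
    refine ⟨x ^ (l - k) • t, Submodule.smul_mem _ _ (hf hnm ht), ?_, ?_⟩
    · rw [smul_smul, ← pow_add, ← h0]
      congr 2
      lia
    · rw [smul_smul, ← pow_add, ← hz]
      congr 2
      lia
  obtain ⟨_, ⟨⟨a, b⟩, rfl⟩, hmin⟩ := IsArtinian.set_has_minimal
    (Set.range fun q : ℕ × ℕ => L q.1 q.2) ⟨_, (0, 0), rfl⟩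
  have hstab {n k : ℕ} (hn : a ≤ n) (hk : b ≤ k) : L n k = L a b :=
    (hL hn hk).eq_of_not_lt (hmin _ ⟨(n, k), rfl⟩)
  have hcol (k : ℕ) : ∃ N, ∀ n, N ≤ n → L n k = L N k := by
    obtain ⟨N, hN⟩ := IsArtinian.monotone_stabilizes
      (⟨fun n => L n k, fun n m hnm => hL hnm le_rfl⟩ : ℕ →o (Submodule A _)ᵒᵈ)
    exact ⟨N, fun n hn => (hN n hn).symm⟩
  choose N hN using hcol
  let N₀ := max a ((Finset.range b).sup N)
  have hN₀ (n : ℕ) (hn : N₀ ≤ n) (k : ℕ) : L N₀ k ≤ L n k := by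
    rcases le_or_gt b k with hk | hk
    · rw [hstab (le_max_left _ _) hk, hstab ((le_max_left _ _).trans hn) hk]
    · have : N k ≤ N₀ := (Finset.le_sup (Finset.mem_range.2 hk)).trans (le_max_right _ _)
      rw [hN k _ this, hN k n (this.trans hn)]
  refine ⟨N₀, fun n hn => ?_⟩
  have key (k : ℕ) : ∀ t ∈ f N₀, x ^ k • t = 0 → t ∈ f n := by
    induction k with
    | zero =>
      intro t _ h0
      rw [pow_zero, one_smul] at h0
      exact h0 ▸ Submodule.zero_mem _
    | succ k ih =>
      intro t ht h0
      have hk : x ^ k • t ∈ LinearMap.ker (LinearMap.lsmul A T x) := by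
        rwa [LinearMap.mem_ker, LinearMap.lsmul_apply, smul_smul, ← pow_succ']
      obtain ⟨t', ht', -, h1⟩ := (mem_L n k ⟨_, hk⟩).1
        (hN₀ n hn k ((mem_L N₀ k ⟨_, hk⟩).2 ⟨t, ht, h0, rfl⟩))
      have := ih (t - t') (Submodule.sub_mem _ ht (hf hn ht')) (by rw [smul_sub, h1, sub_self])
      simpa using Submodule.add_mem _ this ht'
  have : f N₀ = f n := le_antisymm
    (fun t ht => (hx t).elim fun k hk => key k t ht hk) (fun t => hf hn)
  exact this

lemma isArtinian_of_socle {A : Type*} [CommRing A] (s : Finset A) :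
    ∀ (T : Type u) [AddCommGroup T] [Module A T] (_ : ∀ x ∈ s, ∀ t : T, ∃ k : ℕ, x ^ k • t = 0)
      (W : Submodule A T) (_ : IsArtinian A W) (_ : ∀ t : T, (∀ x ∈ s, x • t = 0) → t ∈ W),
      IsArtinian A T := by
  classical
  induction s using Finset.induction with
  | empty =>
    intro T _ _ _ W hW h
    exact isArtinian_of_injective (LinearMap.id.codRestrict W fun t => h t (by simp))
      fun a b hab => congrArg Subtype.val hab
  | insert x s _ ih =>
    intro T _ _ hT W hW h
    refine isArtinian_of_ker_smul x (hT x (Finset.mem_insert_self _ _)) ?_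
    let K := LinearMap.ker (LinearMap.lsmul A T x)
    refine ih K (fun y hy t => ?_) (W.comap K.subtype) ?_ fun t ht => ?_
    · obtain ⟨k, hk⟩ := hT y (Finset.mem_insert_of_mem hy) t
      exact ⟨k, Subtype.ext hk⟩
    · exact isArtinian_of_injective
        ((K.subtype.comp (W.comap K.subtype).subtype).codRestrict W fun t => t.2)
        fun a b hab => by
          have h : (a.1.1 : T) = b.1.1 := congrArg (fun w : W => (w : T)) hab
          exact Subtype.ext (Subtype.ext h)
    · refine h _ fun y hy => ?_
      rcases Finset.mem_insert.1 hy with rfl | hy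
      · exact t.2
      · exact congrArg Subtype.val (ht y hy)

/-- A finitely generated module killed by a maximal ideal is Artinian. -/
lemma isArtinian_of_maximal_smul_eq_zero {A W : Type*} [CommRing A] [AddCommGroup W] [Module A W]
    [Module.Finite A W] (m : Ideal A) [m.IsMaximal] (h : ∀ a ∈ m, ∀ w : W, a • w = 0) :
    IsArtinian A W := by
  have hm : Module.IsTorsionBySet A W m := fun w a => h a a.2 w
  let := hm.module
  let := Ideal.Quotient.field m
  have : IsScalarTower A (A ⧸ m) W := hm.isScalarTower
  have : Module.Finite (A ⧸ m) W := Module.Finite.of_restrictScalars_finite A _ _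
  exact isArtinian_of_surjective_algebraMap (S := A) (R := A ⧸ m) Ideal.Quotient.mk_surjective

end Artinian

section MinimalSupport

variable {R : Type u} [CommRing R] {T : Type u} [AddCommGroup T] [Module R T]

lemma exists_smul_eq_zero_of_fg {𝔞 : Ideal R} (h𝔞 : 𝔞.FG) (S : Submonoid R) (t : T)
    (h : ∀ a ∈ 𝔞, ∃ s ∈ S, s • a • t = 0) : ∃ s ∈ S, ∀ a ∈ 𝔞, a • s • t = 0 := by
  induction 𝔞, h𝔞 using Submodule.fg_induction with
  | singleton x =>
    obtain ⟨s, hs, h⟩ := h x (Submodule.mem_span_singleton_self x)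
    refine ⟨s, hs, fun a ha => ?_⟩
    obtain ⟨c, rfl⟩ := Submodule.mem_span_singleton.1 ha
    rw [smul_eq_mul, mul_smul, smul_comm x, h, smul_zero]
  | sup I J _ _ hI hJ =>
    obtain ⟨s, hs, h1⟩ := hI fun a ha => h a (Ideal.mem_sup_left ha)
    obtain ⟨s', hs', h2⟩ := hJ fun a ha => h a (Ideal.mem_sup_right ha)
    refine ⟨s * s', S.mul_mem hs hs', fun a ha => ?_⟩
    obtain ⟨b, hb, c, hc, rfl⟩ := Submodule.mem_sup.1 ha
    rw [add_smul]
    nth_rw 1 [mul_comm s]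
    rw [mul_smul, mul_smul, smul_comm b, smul_comm c, h1 b hb, h2 c hc]
    simp

/-- The submodule of elements killed by an ideal. -/
def annBy (T : Type u) [AddCommGroup T] [Module R T] (𝔞 : Ideal R) : Submodule R T where
  carrier := {t | ∀ a ∈ 𝔞, a • t = 0}
  zero_mem' a _ := smul_zero a
  add_mem' h h' a ha := by rw [smul_add, h a ha, h' a ha, add_zero]
  smul_mem' r t h a ha := by rw [smul_comm, h a ha, smul_zero]

variable [IsNoetherianRing R] {𝔞 : Ideal R}

lemma support_subset_support_annBy (hT : IsTorsionIdeal 𝔞 T) (hV : (annBy T 𝔞).FG) :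
    Module.support R T ⊆ Module.support R (annBy T 𝔞) := by
  intro p hp
  by_contra hcon
  have hfin : Module.Finite R (annBy T 𝔞) := Module.Finite.iff_fg.2 hV
  have hV' (v) (hv : v ∈ annBy T 𝔞) : ∃ s ∈ p.asIdeal.primeCompl, s • v = 0 := by
    obtain ⟨s, hs, h⟩ := Module.notMem_support_iff'.1 hcon ⟨v, hv⟩
    exact ⟨s, hs, congrArg Subtype.val h⟩
  have key (k : ℕ) : ∀ t : T, (∀ a ∈ 𝔞 ^ k, a • t = 0) → ∃ s ∈ p.asIdeal.primeCompl, s • t = 0 := by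
    induction k with
    | zero => exact fun t ht => ⟨1, Submonoid.one_mem _, ht 1 (by simp)⟩
    | succ k ih =>
      intro t ht
      obtain ⟨s, hs, h⟩ := exists_smul_eq_zero_of_fg (IsNoetherian.noetherian 𝔞)
        p.asIdeal.primeCompl t fun a ha => ih (a • t) fun b hb => by
          rw [smul_smul]
          exact ht _ (pow_succ 𝔞 k ▸ Ideal.mul_mem_mul hb ha)
      obtain ⟨s', hs', h'⟩ := hV' _ h
      exact ⟨s' * s, Submonoid.mul_mem _ hs' hs, by rw [mul_smul, h']⟩
  obtain ⟨t, ht⟩ := Module.mem_support_iff'.1 hp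
  obtain ⟨k, hk⟩ := hT t
  obtain ⟨s, hs, h⟩ := key k t hk
  exact ht s hs h

lemma finite_minimal_support (hT : IsTorsionIdeal 𝔞 T) (hV : (annBy T 𝔞).FG) :
    {p | Minimal (· ∈ Module.support R T) p}.Finite := by
  have hfin : Module.Finite R (annBy T 𝔞) := Module.Finite.iff_fg.2 hV
  have hsub : Module.support R (annBy T 𝔞) ⊆ Module.support R T :=
    Module.support_subset_of_injective _ (Submodule.injective_subtype _)
  refine ((Ideal.finite_minimalPrimes_of_isNoetherianRing R
    (Module.annihilator R (annBy T 𝔞))).preimage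
      (f := PrimeSpectrum.asIdeal) (fun p _ q _ h => PrimeSpectrum.ext h)).subset fun p hp => ?_
  refine ⟨⟨p.2, Module.annihilator_le_of_mem_support (support_subset_support_annBy hT hV hp.1)⟩,
    fun q hq hqp => ?_⟩
  exact hp.2 (y := ⟨q, hq.1⟩) (hsub (by rw [Module.support_eq_zeroLocus]; exact hq.2)) hqp

omit [IsNoetherianRing R] in
/-- At a minimal prime of the support every element is torsion for that prime. -/
lemma exists_smul_pow_eq_zero_of_minimal {p : PrimeSpectrum R}
    (hp : Minimal (· ∈ Module.support R T) p) {a : R} (ha : a ∈ p.asIdeal) (t : T) :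
    ∃ s ∈ p.asIdeal.primeCompl, ∃ k : ℕ, s • a ^ k • t = 0 := by
  by_contra! hcon
  obtain ⟨q, hq, hle, hdisj⟩ :=
    Ideal.exists_le_prime_disjoint (LinearMap.ker (LinearMap.toSpanSingleton R T t))
    (p.asIdeal.primeCompl ⊔ Submonoid.powers a) (Set.disjoint_left.2 fun r hr hr' => by
      obtain ⟨s, hs, _, ⟨k, rfl⟩, rfl⟩ := Submonoid.mem_sup.1 hr'
      refine hcon s hs k ?_
      rw [smul_smul]
      exact hr)
  have hqp : q ≤ p.asIdeal := fun r hr => by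
    by_contra hrp
    exact Set.disjoint_left.1 hdisj hr (Submonoid.mem_sup_left (S := p.asIdeal.primeCompl) hrp)
  have hq' : (⟨q, hq⟩ : PrimeSpectrum R) ∈ Module.support R T :=
    Module.mem_support_iff'.2 ⟨t, fun r hr h0 => hr (hle h0)⟩
  exact Set.disjoint_left.1 hdisj (hp.2 hq' hqp ha)
    (Submonoid.mem_sup_right (Submonoid.mem_powers a))

/-- The localization of `T` at a minimal prime of its support is Artinian. -/
lemma isArtinian_localizedModule_of_minimal (hT : IsTorsionIdeal 𝔞 T) (hV : (annBy T 𝔞).FG)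
    {p : PrimeSpectrum R} (hp : Minimal (· ∈ Module.support R T) p) :
    IsArtinian (Localization.AtPrime p.asIdeal) (LocalizedModule p.asIdeal.primeCompl T) := by
  classical
  let A := Localization.AtPrime p.asIdeal
  let Tp := LocalizedModule p.asIdeal.primeCompl T
  let f : T →ₗ[R] Tp := LocalizedModule.mkLinearMap p.asIdeal.primeCompl T
  have hf (t : T) : f t = 0 ↔ ∃ s ∈ p.asIdeal.primeCompl, s • t = 0 := by
    rw [IsLocalizedModule.eq_zero_iff p.asIdeal.primeCompl f]
    simp [Submonoid.smul_def]
  have hunit (s) (hs : s ∈ p.asIdeal.primeCompl) (z : Tp) (h : s • z = 0) : z = 0 :=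
    IsLocalizedModule.smul_injective f (⟨s, hs⟩ : p.asIdeal.primeCompl)
      (h.trans (smul_zero s).symm)
  have hsurj (z : Tp) : ∃ s ∈ p.asIdeal.primeCompl, ∃ t, s • z = f t := by
    obtain ⟨⟨t, s⟩, h⟩ := IsLocalizedModule.surj p.asIdeal.primeCompl f z
    exact ⟨s, s.2, t, h⟩
  have h𝔞 : 𝔞 ≤ p.asIdeal := fun a ha => by
    obtain ⟨t, ht⟩ := Module.mem_support_iff'.1 hp.1
    obtain ⟨k, hk⟩ := hT t
    by_contra hap
    exact ht _ (p.asIdeal.primeCompl.pow_mem hap k) (hk _ (Ideal.pow_mem_pow ha k))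
  obtain ⟨s, hs⟩ := IsNoetherian.noetherian p.asIdeal
  let m := IsLocalRing.maximalIdeal A
  have hmap : p.asIdeal.map (algebraMap R A) = m := Localization.AtPrime.map_eq_maximalIdeal
  have hm : Ideal.span (algebraMap R A '' s) = m := by
    rw [← hmap, ← Ideal.map_span]
    exact congrArg _ hs
  let W : Submodule A Tp := annBy Tp m
  have hW : ∀ z ∈ W, z ∈ Submodule.span A (f '' annBy T 𝔞) := by
    intro z hz
    obtain ⟨u, hu, t, hut⟩ := hsurj z
    obtain ⟨w, hw, h⟩ := exists_smul_eq_zero_of_fg (IsNoetherian.noetherian 𝔞)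
      p.asIdeal.primeCompl t fun a ha => (hf _).1 (by
        rw [map_smul, ← hut, smul_comm, ← algebraMap_smul A a z, hz, smul_zero]
        rw [← hmap]
        exact Ideal.mem_map_of_mem _ (h𝔞 ha))
    have hu' : IsUnit (algebraMap R A (w * u)) :=
      IsLocalization.map_units A (⟨w * u, Submonoid.mul_mem _ hw hu⟩ : p.asIdeal.primeCompl)
    rw [← Submodule.smul_mem_iff_of_isUnit _ hu', algebraMap_smul, mul_smul, hut, ← map_smul]
    exact Submodule.subset_span ⟨_, h, rfl⟩
  have hVfin : Module.Finite A (Submodule.span A (f '' annBy T 𝔞)) := by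
    obtain ⟨c, hc⟩ := hV
    refine Module.Finite.iff_fg.2 ⟨(c.image f), le_antisymm ?_ ?_⟩
    · refine Submodule.span_mono ?_
      rw [Finset.coe_image, ← hc]
      exact Set.image_mono Submodule.subset_span
    · rw [Submodule.span_le, ← hc, Finset.coe_image, ← Submodule.map_coe, Submodule.map_span]
      exact Submodule.span_le_restrictScalars R A _
  have hWfin : Module.Finite A W :=
    .of_injective (Submodule.inclusion hW) (Submodule.inclusion_injective _)
  have hWart : IsArtinian A W :=
    isArtinian_of_maximal_smul_eq_zero m fun a ha w => Subtype.ext (w.2 a ha)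
  refine isArtinian_of_socle (s.image (algebraMap R A)) Tp (fun x hx z => ?_) W hWart
    fun z hz => ?_
  · obtain ⟨a, ha, rfl⟩ := Finset.mem_image.1 hx
    obtain ⟨u, hu, t, hut⟩ := hsurj z
    obtain ⟨v, hv, k, hk⟩ := exists_smul_pow_eq_zero_of_minimal hp
      (hs ▸ Submodule.subset_span ha : a ∈ p.asIdeal) t
    refine ⟨k, hunit u hu _ ?_⟩
    rw [← map_pow, algebraMap_smul, smul_comm, hut, ← map_smul]
    exact (hf _).2 ⟨v, hv, hk⟩
  · have : m ≤ LinearMap.ker (LinearMap.toSpanSingleton A Tp z) := by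
      rw [← hm, Ideal.span_le]
      rintro _ ⟨a, ha, rfl⟩
      exact hz _ (Finset.mem_image_of_mem _ ha)
    exact fun a ha => this ha

/-- Uniformly in the minimal primes of the support, `T` is locally the sum of `xT` and the
`x ^ n`-torsion. -/
lemma exists_forall_minimal_pow_smul_eq_zero (hT : IsTorsionIdeal 𝔞 T) (hV : (annBy T 𝔞).FG)
    (x : R) : ∃ n : ℕ, ∀ p, Minimal (· ∈ Module.support R T) p → ∀ t : T,
      ∃ s ∈ p.asIdeal.primeCompl, ∃ t' : T, x ^ n • (s • t - x • t') = 0 := by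
  have key (p : PrimeSpectrum R) (hp : Minimal (· ∈ Module.support R T) p) : ∃ n : ℕ, ∀ t : T,
      ∃ s ∈ p.asIdeal.primeCompl, ∃ t' : T, x ^ n • (s • t - x • t') = 0 := by
    have := isArtinian_localizedModule_of_minimal hT hV hp
    let A := Localization.AtPrime p.asIdeal
    let f := LocalizedModule.mkLinearMap p.asIdeal.primeCompl T
    obtain ⟨n, hn⟩ := IsArtinian.range_smul_pow_stabilizes
      (LocalizedModule p.asIdeal.primeCompl T) (algebraMap R A x)
    refine ⟨n, fun t => ?_⟩
    have h1 : algebraMap R A x ^ n • f t ∈ LinearMap.range (algebraMap R A x ^ (n + 1) •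
        (LinearMap.id : LocalizedModule p.asIdeal.primeCompl T →ₗ[A] _)) :=
      hn (n + 1) n.le_succ ▸ ⟨f t, rfl⟩
    obtain ⟨z, hz⟩ := h1
    obtain ⟨⟨t', u⟩, h⟩ := IsLocalizedModule.surj p.asIdeal.primeCompl f z
    have h2 : f (x ^ n • ((u : R) • t - x • t')) = 0 := by
      have hz' : x ^ (n + 1) • z = x ^ n • f t := by
        rw [← algebraMap_smul A, ← algebraMap_smul A (x ^ n), map_pow, map_pow]
        exact hz
      rw [map_smul, map_sub, map_smul, map_smul, ← h, smul_sub, smul_comm (x ^ n), ← hz',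
        Submonoid.smul_def, smul_comm x, smul_comm (x ^ n), smul_smul (x ^ n), ← pow_succ, sub_self]
    obtain ⟨v, hv⟩ := (IsLocalizedModule.eq_zero_iff p.asIdeal.primeCompl f).1 h2
    refine ⟨v * u, Submonoid.mul_mem _ v.2 u.2, (v : R) • t', ?_⟩
    rw [smul_comm x, mul_smul, ← smul_sub, smul_comm]
    exact hv
  choose! n hn using key
  obtain ⟨N, hN⟩ := ((finite_minimal_support hT hV).image n).bddAbove
  refine ⟨N, fun p hp t => ?_⟩
  obtain ⟨s, hs, t', h⟩ := hn p hp t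
  refine ⟨s, hs, t', ?_⟩
  rw [← Nat.sub_add_cancel (hN ⟨p, hp, rfl⟩), pow_add, mul_smul, h, smul_zero]

end MinimalSupport

section SupportDimension

variable {R : Type u} [CommRing R]

/-- Every strict chain in the support of `T` has length less than `d`. -/
def SupportDimLT (d : ℕ) (R : Type u) [CommRing R] (T : Type u) [AddCommGroup T] [Module R T] :
    Prop :=
  ∀ s : LTSeries (Module.support R T), s.length < d

variable {T T' : Type u} [AddCommGroup T] [Module R T] [AddCommGroup T'] [Module R T'] {d : ℕ}

lemma SupportDimLT.of_subset (h : SupportDimLT d R T)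
    (hsub : Module.support R T' ⊆ Module.support R T) : SupportDimLT d R T' :=
  fun s => h (s.map (Set.inclusion hsub) fun _ _ h => h)

lemma SupportDimLT.of_injective (h : SupportDimLT d R T) (f : T' →ₗ[R] T)
    (hf : Function.Injective f) : SupportDimLT d R T' :=
  h.of_subset (Module.support_subset_of_injective f hf)

lemma SupportDimLT.of_surjective (h : SupportDimLT d R T) (f : T →ₗ[R] T')
    (hf : Function.Surjective f) : SupportDimLT d R T' :=
  h.of_subset (Module.support_subset_of_surjective f hf)

lemma SupportDimLT.subsingleton (h : SupportDimLT 0 R T) : Subsingleton T := by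
  rw [← Module.support_eq_empty_iff (R := R), Set.eq_empty_iff_forall_notMem]
  exact fun p hp => absurd (h (RelSeries.singleton _ ⟨p, hp⟩)) (Nat.not_lt_zero _)

lemma SupportDimLT.of_notMem_of_minimal (h : SupportDimLT (d + 1) R T)
    (hsub : Module.support R T' ⊆ Module.support R T)
    (hmin : ∀ p, Minimal (· ∈ Module.support R T) p → p ∉ Module.support R T') :
    SupportDimLT d R T' := by
  intro s
  have hhead := s.head.2
  obtain ⟨q, hq, hlt⟩ : ∃ q ∈ Module.support R T, q < s.head.1 := by
    by_contra! hcon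
    refine hmin s.head.1 ⟨hsub hhead, fun q hq hle => ?_⟩ hhead
    exact (hle.eq_of_not_lt (hcon q hq)).ge
  let s' : LTSeries (Module.support R T) := s.map (Set.inclusion hsub) fun _ _ h => h
  have hlt' : (⟨q, hq⟩ : Module.support R T) < s'.head := hlt
  have hlen := RelSeries.cons_length s' ⟨q, hq⟩ hlt'
  exact Nat.lt_of_succ_lt_succ (hlen ▸ h (s'.cons ⟨q, hq⟩ hlt') : s'.length + 1 < d + 1)

lemma supportDimLT_of_moduleDim_le {n : ℕ} (h : moduleDim R T ≤ n) : SupportDimLT (n + 1) R T :=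
  fun s => Nat.lt_succ_of_le (by
    have := (Order.LTSeries.length_le_krullDim s).trans h
    exact_mod_cast this)

end SupportDimension

section Cofinite

variable {R : Type u} [CommRing R] [IsNoetherianRing R]

/-- The hypotheses of the cofiniteness criterion in small dimension, for modules killed by `J`. -/
structure FiniteExtUpTo (𝔞 J : Ideal R) (d : ℕ) (T : Type u) [AddCommGroup T] [Module R T] :
    Prop where
  torsion : IsTorsionIdeal 𝔞 T
  dim : SupportDimLT (d + 1) R T
  smul_eq_zero : ∀ a ∈ J, ∀ t : T, a • t = 0
  finite : ∀ i ≤ d, ExtFinite 𝔞 i T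

variable {𝔞 J : Ideal R} {d : ℕ} {T : Type u} [AddCommGroup T] [Module R T]

omit [IsNoetherianRing R] in
lemma FiniteExtUpTo.of_injective (h : FiniteExtUpTo 𝔞 J d T) {T' : Type u} [AddCommGroup T']
    [Module R T'] (f : T' →ₗ[R] T) (hf : Function.Injective f)
    (hfin : ∀ i ≤ d, ExtFinite 𝔞 i T') : FiniteExtUpTo 𝔞 J d T' :=
  ⟨h.torsion.of_injective f hf, h.dim.of_injective f hf, fun a ha t => hf (by
    rw [map_smul, h.smul_eq_zero a ha, map_zero]), hfin⟩

omit [IsNoetherianRing R] in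
lemma exact_ker_subtype_rangeRestrict {A B : Type u} [AddCommGroup A] [Module R A]
    [AddCommGroup B] [Module R B] (φ : A →ₗ[R] B) :
    Function.Exact (LinearMap.ker φ).subtype φ.rangeRestrict := by
  rw [LinearMap.exact_iff, Submodule.range_subtype, LinearMap.ker_rangeRestrict]

lemma FiniteExtUpTo.ker (hd : d ≤ 1) (h : FiniteExtUpTo 𝔞 J d T) (y : R) :
    FiniteExtUpTo 𝔞 J d (LinearMap.ker (LinearMap.lsmul R T y)) := by
  have hinj := Submodule.injective_subtype (LinearMap.ker (LinearMap.lsmul R T y))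
  refine h.of_injective _ hinj fun i hi => ?_
  match i with
  | 0 => exact .of_injective hinj (h.finite 0 d.zero_le)
  | 1 =>
    exact .left_succ hinj (LinearMap.surjective_rangeRestrict _)
      (exact_ker_subtype_rangeRestrict _)
      (.of_injective (Submodule.injective_subtype _) (h.finite 0 d.zero_le)) (h.finite 1 hi)
  | i + 2 => lia

lemma FiniteExtUpTo.range (hd : d ≤ 1) (h : FiniteExtUpTo 𝔞 J d T) {x : R}
    (hK : ∀ i, ExtFinite 𝔞 i (LinearMap.ker (LinearMap.lsmul R T x))) :
    FiniteExtUpTo 𝔞 J d (LinearMap.range (LinearMap.lsmul R T x)) := by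
  have hinj := Submodule.injective_subtype (LinearMap.range (LinearMap.lsmul R T x))
  refine h.of_injective _ hinj fun i hi => ?_
  match i with
  | 0 => exact .of_injective hinj (h.finite 0 d.zero_le)
  | 1 =>
    exact .right (Submodule.injective_subtype _) (LinearMap.surjective_rangeRestrict _)
      (exact_ker_subtype_rangeRestrict _) (h.finite 1 hi) (hK 2)
  | i + 2 => lia

lemma FiniteExtUpTo.extFinite_ker (hd : d ≤ 1) {x : R}
    (H : ∀ (S : Type u) [AddCommGroup S] [Module R S],
      FiniteExtUpTo 𝔞 (J ⊔ Ideal.span {x}) d S → ∀ i, ExtFinite 𝔞 i S)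
    (h : FiniteExtUpTo 𝔞 J d T) (i : ℕ) :
    ExtFinite 𝔞 i (LinearMap.ker (LinearMap.lsmul R T x)) := by
  refine H _ ⟨(h.ker hd x).torsion, (h.ker hd x).dim, fun a ha t => ?_, (h.ker hd x).finite⟩ i
  obtain ⟨b, hb, c, hc, rfl⟩ := Submodule.mem_sup.1 ha
  obtain ⟨r, rfl⟩ := Ideal.mem_span_singleton'.1 hc
  rw [add_smul, (h.ker hd x).smul_eq_zero b hb, zero_add, mul_smul,
    show x • t = 0 from Subtype.ext t.2, smul_zero]

lemma FiniteExtUpTo.extFinite_of_pow_smul_eq_zero (hd : d ≤ 1) {x : R}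
    (H : ∀ (S : Type u) [AddCommGroup S] [Module R S],
      FiniteExtUpTo 𝔞 (J ⊔ Ideal.span {x}) d S → ∀ i, ExtFinite 𝔞 i S) (n : ℕ) :
    ∀ (S : Type u) [AddCommGroup S] [Module R S] (_ : FiniteExtUpTo 𝔞 J d S)
      (_ : ∀ s : S, x ^ n • s = 0) (i : ℕ), ExtFinite 𝔞 i S := by
  induction n with
  | zero =>
    intro S _ _ _ h0 i
    have : Subsingleton S := subsingleton_of_forall_eq 0 fun s => by simpa using h0 s
    exact .of_finite 𝔞 S i
  | succ n ih =>
    intro S _ _ h h0 i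
    have hK := h.extFinite_ker hd H
    refine .middle (Submodule.injective_subtype _) (LinearMap.surjective_rangeRestrict _)
      (exact_ker_subtype_rangeRestrict _) (hK i) (ih _ (h.range hd hK) ?_ i)
    rintro ⟨_, s, rfl⟩
    refine Subtype.ext ?_
    change x ^ n • x • s = 0
    rw [smul_smul, ← pow_succ, h0]

lemma FiniteExtUpTo.extFinite_ker_pow (hd : d ≤ 1) {x : R}
    (H : ∀ (S : Type u) [AddCommGroup S] [Module R S],
      FiniteExtUpTo 𝔞 (J ⊔ Ideal.span {x}) d S → ∀ i, ExtFinite 𝔞 i S)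
    (h : FiniteExtUpTo 𝔞 J d T) (n i : ℕ) :
    ExtFinite 𝔞 i (LinearMap.ker (LinearMap.lsmul R T (x ^ n))) :=
  extFinite_of_pow_smul_eq_zero hd H n _ (h.ker hd _) (fun s => Subtype.ext s.2) i

/-- The map from the `x ^ n`-torsion of `T` to `T / xT`. -/
def kerPowToCoker (T : Type u) [AddCommGroup T] [Module R T] (x : R) (n : ℕ) :
    LinearMap.ker (LinearMap.lsmul R T (x ^ n)) →ₗ[R] T ⧸ LinearMap.range (LinearMap.lsmul R T x) :=
  (LinearMap.range (LinearMap.lsmul R T x)).mkQ ∘ₗ Submodule.subtype _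

lemma extFinite_ker_kerPowToCoker {x : R}
    (hK : ∀ n i, ExtFinite 𝔞 i (LinearMap.ker (LinearMap.lsmul R T (x ^ n)))) (n i : ℕ) :
    ExtFinite 𝔞 i (LinearMap.ker (kerPowToCoker T x n)) := by
  have hmem (t : LinearMap.ker (LinearMap.lsmul R T (x ^ (n + 1)))) :
      x • t.1 ∈ LinearMap.ker (LinearMap.lsmul R T (x ^ n)) := by
    rw [LinearMap.mem_ker, LinearMap.lsmul_apply, smul_smul, ← pow_succ]
    exact t.2
  let ψ₀ : LinearMap.ker (LinearMap.lsmul R T (x ^ (n + 1))) →ₗ[R]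
      LinearMap.ker (LinearMap.lsmul R T (x ^ n)) :=
    (LinearMap.lsmul R T x ∘ₗ Submodule.subtype _).codRestrict _ hmem
  let ψ : LinearMap.ker (LinearMap.lsmul R T (x ^ (n + 1))) →ₗ[R]
      LinearMap.ker (kerPowToCoker T x n) :=
    ψ₀.codRestrict _ fun t => (Submodule.Quotient.mk_eq_zero _).2 ⟨t.1, rfl⟩
  have hle : LinearMap.ker (LinearMap.lsmul R T (x ^ 1)) ≤
      LinearMap.ker (LinearMap.lsmul R T (x ^ (n + 1))) := fun t ht => by
    rw [pow_one] at ht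
    rw [LinearMap.mem_ker, LinearMap.lsmul_apply, pow_succ, mul_smul,
      show x • t = 0 from ht, smul_zero]
  refine .right (f := Submodule.inclusion hle) (g := ψ) (Submodule.inclusion_injective _) ?_ ?_
    (hK _ i) (hK _ (i + 1))
  · rintro ⟨⟨s, hs⟩, h⟩
    obtain ⟨t, rfl⟩ := (Submodule.Quotient.mk_eq_zero _).1 h
    refine ⟨⟨t, ?_⟩, rfl⟩
    rw [LinearMap.mem_ker, LinearMap.lsmul_apply, pow_succ, mul_smul]
    exact hs
  · rintro ⟨t, ht⟩
    rw [Subtype.ext_iff, Subtype.ext_iff]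
    constructor
    · intro h
      exact ⟨⟨t, by rw [pow_one]; exact h⟩, rfl⟩
    · rintro ⟨⟨s, hs⟩, h⟩
      rw [pow_one] at hs
      cases h
      exact hs

/-- An inductive cofiniteness criterion: in dimension at most one, finiteness of as many `Ext`
modules as the dimension requires forces finiteness of all. -/
theorem extFinite_of_supportDimLT (d : ℕ) (hd : d ≤ 2) :
    ∀ (T : Type u) [AddCommGroup T] [Module R T] (_ : IsTorsionIdeal 𝔞 T)
      (_ : SupportDimLT d R T) (_ : ∀ i < d, ExtFinite 𝔞 i T) (i : ℕ), ExtFinite 𝔞 i T := by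
  induction d with
  | zero =>
    intro T _ _ _ h _ i
    have := h.subsingleton
    exact .of_finite 𝔞 T i
  | succ d ihd =>
    have hd1 : d ≤ 1 := by lia
    suffices h : ∀ J : Ideal R, J ≤ 𝔞 → ∀ (T : Type u) [AddCommGroup T] [Module R T],
        FiniteExtUpTo 𝔞 J d T → ∀ i, ExtFinite 𝔞 i T from
      fun T _ _ h1 h2 h3 => h ⊥ bot_le T ⟨h1, h2, fun a ha t => by
        rw [(Submodule.mem_bot R).1 ha, zero_smul], fun i hi => h3 i (Nat.lt_succ_of_le hi)⟩
    intro J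
    induction J using IsNoetherian.induction with | _ J ihJ
    intro hJ T _ _ h
    rcases hJ.eq_or_lt with rfl | hlt
    · exact .of_smul_eq_zero (h.finite 0 d.zero_le) h.smul_eq_zero
    obtain ⟨x, hx, hxJ⟩ := SetLike.exists_of_lt hlt
    have H := ihJ (J ⊔ Ideal.span {x}) (left_lt_sup.2 fun hle =>
      hxJ (hle (Ideal.mem_span_singleton_self x)))
      (sup_le hJ ((Ideal.span_singleton_le_iff_mem _).2 hx))
    have hKn := h.extFinite_ker_pow hd1 H
    have hK := h.extFinite_ker hd1 H
    obtain ⟨n, hn⟩ := exists_forall_minimal_pow_smul_eq_zero h.torsion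
      (finite_of_extFinite_zero (h.finite 0 d.zero_le) fun a ha v hv => hv a ha) x
    let φ := kerPowToCoker T x n
    have hI (i) : ExtFinite 𝔞 i (LinearMap.range φ) :=
      .right (Submodule.injective_subtype _) (LinearMap.surjective_rangeRestrict _)
        (exact_ker_subtype_rangeRestrict φ) (hKn n i) (extFinite_ker_kerPowToCoker hKn n (i + 1))
    have hcok (i) (hi : i < d) :
        ExtFinite 𝔞 i (T ⧸ LinearMap.range (LinearMap.lsmul R T x)) :=
      .right (Submodule.injective_subtype _) (Submodule.mkQ_surjective _)
        (LinearMap.exact_subtype_mkQ _) (h.finite i hi.le) ((h.range hd1 hK).finite (i + 1) hi)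
    let π : T →ₗ[R] (T ⧸ LinearMap.range (LinearMap.lsmul R T x)) ⧸ LinearMap.range φ :=
      Submodule.mkQ _ ∘ₗ Submodule.mkQ _
    have hπ : Function.Surjective π :=
      (Submodule.mkQ_surjective _).comp (Submodule.mkQ_surjective _)
    have hQ := ihd (by lia) _ (h.torsion.of_surjective π hπ)
      (h.dim.of_notMem_of_minimal (Module.support_subset_of_surjective π hπ) fun p hp hpQ => by
        obtain ⟨z, hz⟩ := Module.mem_support_iff'.1 hpQ
        obtain ⟨t, rfl⟩ := hπ z
        obtain ⟨s, hs, t', h0⟩ := hn p hp t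
        refine hz s hs ?_
        rw [← map_smul]
        refine (Submodule.Quotient.mk_eq_zero _).2 ⟨⟨s • t - x • t', h0⟩, ?_⟩
        refine (Submodule.Quotient.eq _).2 ⟨-t', ?_⟩
        simp)
      (fun i hi => .right (Submodule.injective_subtype _) (Submodule.mkQ_surjective _)
        (LinearMap.exact_subtype_mkQ _) (hcok i hi) (hI (i + 1)))
    exact .of_ker_of_coker hx hK fun i =>
      .middle (Submodule.injective_subtype _) (Submodule.mkQ_surjective _)
        (LinearMap.exact_subtype_mkQ _) (hI i) (hQ i)

end Cofinite

section Main

variable {R : Type u} [CommRing R] [IsNoetherianRing R] {𝔞 : Ideal R}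

lemma extFinite_of_memFD_one {H : Type u} [AddCommGroup H] [Module R H]
    (htors : IsTorsionIdeal 𝔞 H) (hH : MemFD R 1 H) (h0 : ExtFinite 𝔞 0 H)
    (h1 : ExtFinite 𝔞 1 H) (i : ℕ) : ExtFinite 𝔞 i H := by
  obtain ⟨N, hN, hdim⟩ := hH
  have : Module.Finite R N := Module.Finite.iff_fg.2 hN
  have hNfin := ExtFinite.of_finite 𝔞 N
  have hright (i) (h : ExtFinite 𝔞 i H) : ExtFinite 𝔞 i (H ⧸ N) :=
    .right N.injective_subtype N.mkQ_surjective (LinearMap.exact_subtype_mkQ N) h (hNfin (i + 1))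
  refine .middle N.injective_subtype N.mkQ_surjective (LinearMap.exact_subtype_mkQ N) (hNfin i)
    (extFinite_of_supportDimLT 2 le_rfl _ (htors.of_surjective _ N.mkQ_surjective)
      (supportDimLT_of_moduleDim_le hdim) (fun i hi => ?_) i)
  match i with
  | 0 => exact hright 0 h0
  | 1 => exact hright 1 h1
  | i + 2 => lia

omit [IsNoetherianRing R] in
lemma MemFD.of_linearEquiv {n : ℕ} {H H' : Type u} [AddCommGroup H] [Module R H]
    [AddCommGroup H'] [Module R H'] (e : H ≃ₗ[R] H') (h : MemFD R n H) : MemFD R n H' := by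
  obtain ⟨N, hN, hdim⟩ := h
  refine ⟨N.map e.toLinearMap, hN.map _, ?_⟩
  unfold moduleDim at *
  rwa [← (Submodule.Quotient.equiv N _ e rfl).support_eq]

lemma extFinite_zero_one_torsionSub {M : Type u} [AddCommGroup M] [Module R M]
    (h0 : ExtFinite 𝔞 0 M) (h1 : ExtFinite 𝔞 1 M) :
    ExtFinite 𝔞 0 (torsionSub 𝔞 M) ∧ ExtFinite 𝔞 1 (torsionSub 𝔞 M) := by
  refine ⟨.of_injective (Submodule.injective_subtype _) h0,
    .left_succ (Submodule.injective_subtype _) (Submodule.mkQ_surjective _)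
      (LinearMap.exact_subtype_mkQ _) ?_ h1⟩
  have : Subsingleton (Abelian.Ext (ModuleCat.of R (R ⧸ 𝔞))
      (ModuleCat.of R (M ⧸ torsionSub 𝔞 M)) 0) :=
    subsingleton_ext_of_torsionFree (𝔞 := 𝔞) (n := 1) (fun a ha x => by
      obtain ⟨r, rfl⟩ := Ideal.Quotient.mk_surjective x
      rw [pow_one] at ha
      exact Ideal.Quotient.eq_zero_iff_mem.2 (Ideal.mul_mem_right r _ ha))
      torsionSub_quotient_torsionSub
  unfold ExtFinite
  infer_instance

theorem extFinite_zero_one_localCohomology (t : ℕ) :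
    ∀ (M : ModuleCat.{u} R) (_ : ∀ i, ExtFinite 𝔞 i M)
      (_ : ∀ i < t, MemFD R 1 ((localCohomology 𝔞 i).obj M)),
      ExtFinite 𝔞 0 ((localCohomology 𝔞 t).obj M) ∧
        ExtFinite 𝔞 1 ((localCohomology 𝔞 t).obj M) := by
  induction t with
  | zero =>
    intro M hM _
    obtain ⟨e⟩ := nonempty_lc_zero_equiv (𝔞 := 𝔞) M
    have := extFinite_zero_one_torsionSub (hM 0) (hM 1)
    exact ⟨this.1.of_linearEquiv e.symm, this.2.of_linearEquiv e.symm⟩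
  | succ t ih =>
    intro M hM hFD
    obtain ⟨e₀⟩ := nonempty_lc_zero_equiv (𝔞 := 𝔞) M
    have hΓ₁ := extFinite_zero_one_torsionSub (hM 0) (hM 1)
    have hΓ := extFinite_of_memFD_one isTorsionIdeal_torsionSub
      ((hFD 0 t.succ_pos).of_linearEquiv e₀) hΓ₁.1 hΓ₁.2
    have hM' (i) : ExtFinite 𝔞 i (M ⧸ torsionSub 𝔞 M) :=
      .right (Submodule.injective_subtype _) (Submodule.mkQ_surjective _)
        (LinearMap.exact_subtype_mkQ _) (hM i) (hΓ (i + 1))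
    obtain ⟨E, hE, f, hf, hE0⟩ := exists_torsionFree_injective_embedding
      (torsionSub_quotient_torsionSub (𝔞 := 𝔞) (M := M))
    have hS := shortExact_of_exact hf (Submodule.mkQ_surjective _) (LinearMap.exact_map_mkQ_range f)
    have hL (i) : ExtFinite 𝔞 i (E ⧸ LinearMap.range f) := by
      have hbij := extDelta_bijective (𝔞 := 𝔞) (n := 1) hS hE0
        (X := ModuleCat.of R (R ⧸ 𝔞)) (fun a ha x => by
          obtain ⟨r, rfl⟩ := Ideal.Quotient.mk_surjective x
          rw [pow_one] at ha
          exact Ideal.Quotient.eq_zero_iff_mem.2 (Ideal.mul_mem_right r _ ha)) i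
      exact (Module.Finite.equiv_iff (LinearEquiv.ofBijective _ hbij)).2 (hM' (i + 1))
    have hequiv (i) : Nonempty ((localCohomology 𝔞 (i + 1)).obj M ≃ₗ[R]
        (localCohomology 𝔞 i).obj (ModuleCat.of R (E ⧸ LinearMap.range f))) := by
      obtain ⟨e⟩ := nonempty_lc_quotient_torsionSub_equiv (𝔞 := 𝔞) M i
      obtain ⟨e'⟩ := nonempty_lc_equiv_of_injective (𝔞 := 𝔞) hS hE0 i
      exact ⟨e.trans e'.symm⟩
    have := ih (ModuleCat.of R (E ⧸ LinearMap.range f)) hL fun i hi => by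
      obtain ⟨e⟩ := hequiv i
      exact (hFD (i + 1) (Nat.succ_lt_succ hi)).of_linearEquiv e
    obtain ⟨e⟩ := hequiv t
    exact ⟨this.1.of_linearEquiv e.symm, this.2.of_linearEquiv e.symm⟩

lemma associatedPrimes_finite_of_extFinite_zero {H : Type u} [AddCommGroup H] [Module R H]
    (htors : IsTorsionIdeal 𝔞 H) (h : ExtFinite 𝔞 0 H) : (associatedPrimes R H).Finite := by
  have : Module.Finite R (annBy H 𝔞) :=
    Module.Finite.iff_fg.2 (finite_of_extFinite_zero h fun a ha v hv => hv a ha)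
  refine (associatedPrimes.finite R (annBy H 𝔞)).subset fun p hp => ?_
  obtain ⟨hprime, f, hf⟩ := (isAssociatedPrime_iff_exists_injective_linearMap p H).1 hp
  obtain ⟨k, hk⟩ := htors (f 1)
  have hle : 𝔞 ≤ p := hprime.le_of_pow_le (n := k) fun a ha => by
    have hfa : f (Ideal.Quotient.mk p a) = 0 := by
      rw [← hk a ha, ← map_smul, Algebra.smul_def, mul_one]
      rfl
    exact Ideal.Quotient.eq_zero_iff_mem.1 (hf (hfa.trans (map_zero f).symm))
  have hmem (y : R ⧸ p) : f y ∈ annBy H 𝔞 := fun a ha => by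
    rw [← map_smul, Algebra.smul_def, Ideal.Quotient.algebraMap_eq,
      Ideal.Quotient.eq_zero_iff_mem.2 (hle ha), zero_mul, map_zero]
  exact (isAssociatedPrime_iff_exists_injective_linearMap p _).2
    ⟨hprime, f.codRestrict _ hmem, fun x y hxy => hf (congrArg Subtype.val hxy)⟩

end Main

end LocalCohomologyFiniteness

/-- Yang–Shen, Remark 4.2(2) (module case): let `𝔞` be a proper ideal of a noetherian ring
`R`, `t ≥ 0`, and `M` an `R`-module with `Ext^i_R(R/𝔞, M)` finitely generated for all `i`.
If `H^i_𝔞(M) ∈ FD_{≤1}` for all `i < t`, then the set `Ass_R H^t_𝔞(M)` is finite. -/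
theorem associatedPrimes_localCohomology_finite_of_memFD_one
    {R : Type u} [CommRing R] [IsNoetherianRing R] (𝔞 : Ideal R) (ha : 𝔞 ≠ ⊤) (t : ℕ)
    (M : ModuleCat.{u} R) (hext : ∀ i : ℕ, Module.Finite R (extIdeal 𝔞 i M))
    (h : ∀ i : ℕ, i < t → MemFD R 1 ((localCohomology 𝔞 i).obj M)) :
    (associatedPrimes R ((localCohomology 𝔞 t).obj M)).Finite :=
  associatedPrimes_finite_of_extFinite_zero (isTorsionIdeal_lc 𝔞 M t)
    (extFinite_zero_one_localCohomology t M (fun i => extFinite_iff_finite_extIdeal.2 (hext i)) h).1
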